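/- Let n, m ≥ 4 be integers and let G = P_n □ P_m be the grid. If a, b, k, l are integers such that a ≥ 3, b ≥ 3, 0 ≤ k ≤ a−2 ≤ n−3 and 0 ≤ l ≤ b−2 ≤ m−3, then ab − (k+l) ∈ S_SC(G). -/

import Mathlib

/-!  Common definitions: oriented graphs, geodesic convexity, convexity number,
strong convexity spectrum, and grid graphs. -/

variable {V : Type*}

/-- A directed walk of length `k` from `u` to `v` along the arc relation `A`,
encoded by the function `f` listing its vertices. -/
def IsDirWalk (A : V → V → Prop) (k : ℕ) (f : ℕ → V) (u v : V) : Prop :=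
  f 0 = u ∧ f k = v ∧ ∀ i, i < k → A (f i) (f (i + 1))

/-- There is a directed walk from `u` to `v`. -/
def DirReachable (A : V → V → Prop) (u v : V) : Prop :=
  ∃ k f, IsDirWalk A k f u v

/-- A digraph (given by its arc relation) is strongly connected. -/
def StrongConnected (A : V → V → Prop) : Prop :=
  ∀ u v : V, DirReachable A u v

/-- A `uv`-geodesic: a directed walk from `u` to `v` of minimum possible length
(such a walk is automatically a directed path). -/
def IsGeodesic (A : V → V → Prop) (k : ℕ) (f : ℕ → V) (u v : V) : Prop :=
  IsDirWalk A k f u v ∧ ∀ k' f', IsDirWalk A k' f' u v → k ≤ k'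

/-- A nonempty vertex set `C` is convex if every vertex lying on a geodesic
between two vertices of `C` (in either direction) belongs to `C`. -/
def DConvex (A : V → V → Prop) (C : Set V) : Prop :=
  C.Nonempty ∧ ∀ u ∈ C, ∀ v ∈ C, ∀ k f, IsGeodesic A k f u v → ∀ i ≤ k, f i ∈ C

/-- `A` is an orientation of the simple graph `G`: every arc is along an edge,
every edge gets an arc, and no edge gets both directions. -/
def IsOrientation (G : SimpleGraph V) (A : V → V → Prop) : Prop :=
  (∀ x y, A x y → G.Adj x y) ∧ (∀ x y, G.Adj x y → A x y ∨ A y x) ∧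
    (∀ x y, A x y → ¬ A y x)

/-- The convexity number of a digraph: the maximum cardinality of a proper convex set. -/
noncomputable def convexityNumber [Fintype V] (A : V → V → Prop) : ℕ :=
  sSup {k | ∃ C : Set V, DConvex A C ∧ C ≠ Set.univ ∧ C.ncard = k}

/-- The strong convexity spectrum of a graph: the set of convexity numbers of
its strongly connected orientations. -/
def strongConvexitySpectrum [Fintype V] (G : SimpleGraph V) : Set ℕ :=
  {k | ∃ A : V → V → Prop, IsOrientation G A ∧ StrongConnected A ∧ convexityNumber A = k}

/-- The grid graph `P_n □ P_m`. -/
def gridGraph (n m : ℕ) : SimpleGraph (Fin n × Fin m) :=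
  (SimpleGraph.pathGraph n).boxProd (SimpleGraph.pathGraph m)

/-!
Every `s` with `7 ≤ s ≤ (n - 1) * (m - 1)` is realized by orienting the grid so that a region with
`s` vertices is a maximum convex set: a staircase, whose row lengths can be chosen with almost any
sum up to `n * (m - 2)`, a set of seven vertices, or, if `n = m`, the square on all but the last row
and column.

The region is convex because a walk that leaves it is forced to waste steps before it can return, so
it is never shorter than a detour inside the region. No larger proper convex set exists because a
convex set with at least two vertices has neither sources nor sinks. Following its arcs forwards or
backwards from a vertex outside the region ends, except for sets small enough to be harmless, in a
part of the grid whose unit squares are directed cycles, and a convex set that contains one arc of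
such a square contains all of it. The same closure argument, applied to a strong component, proves
that the orientation is strong.
-/

/-! ### Directed walks and convex sets -/

section Walks

variable {α β : Type*} {A : α → α → Prop} {B : β → β → Prop} {u v w : α} {i j k : ℕ} {S C : Set α}

/-- `DirWalk A k u v` says that there is a directed walk of length `k` from `u` to `v`; it is the
inductive form of `IsDirWalk`, with the list of vertices forgotten. -/
inductive DirWalk (A : α → α → Prop) : ℕ → α → α → Prop
  | nil (u : α) : DirWalk A 0 u u
  | cons {u w v : α} {k : ℕ} : A u w → DirWalk A k w v → DirWalk A (k + 1) u v

namespace DirWalk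

theorem cast (h : DirWalk A i u v) (hij : i = j) : DirWalk A j u v := hij ▸ h

theorem single (h : A u v) : DirWalk A 1 u v := cons h (nil v)

theorem trans (h₁ : DirWalk A i u w) (h₂ : DirWalk A j w v) : DirWalk A (i + j) u v := by
  induction h₁ with
  | nil => exact h₂.cast (by omega)
  | cons h _ ih => exact (cons h (ih h₂)).cast (by omega)

theorem snoc (h₁ : DirWalk A k u w) (h₂ : A w v) : DirWalk A (k + 1) u v := h₁.trans (single h₂)

theorem eq_of_zero (h : DirWalk A 0 u v) : u = v := by
  cases h; rfl

theorem exists_cons (h : DirWalk A (k + 1) u v) : ∃ w, A u w ∧ DirWalk A k w v := by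
  cases h with | cons h₁ h₂ => exact ⟨_, h₁, h₂⟩

theorem exists_snoc (h : DirWalk A (k + 1) u v) : ∃ w, DirWalk A k u w ∧ A w v := by
  induction k generalizing u with
  | zero =>
    obtain ⟨w, huw, hwv⟩ := h.exists_cons
    exact ⟨u, nil u, hwv.eq_of_zero ▸ huw⟩
  | succ k ih =>
    obtain ⟨x, hux, hxv⟩ := h.exists_cons
    obtain ⟨w, hxw, hwv⟩ := ih hxv
    exact ⟨w, cons hux hxw, hwv⟩

theorem potential_le {φ : α → ℕ} (hφ : ∀ x y, A x y → φ x ≤ φ y + 1) (h : DirWalk A k u v) :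
    φ u ≤ φ v + k := by
  induction h with
  | nil => exact le_rfl
  | cons h _ ih => have := hφ _ _ h; omega

theorem of_isDirWalk {f : ℕ → α} (h : IsDirWalk A k f u v) : DirWalk A k u v := by
  obtain ⟨rfl, rfl, hf⟩ := h
  induction k with
  | zero => exact nil _
  | succ k ih => exact (ih fun i hi => hf i (by omega)).snoc (hf k (by omega))

theorem exists_isDirWalk (h : DirWalk A k u v) : ∃ f, IsDirWalk A k f u v := by
  induction h with
  | nil u => exact ⟨fun _ => u, rfl, rfl, by simp⟩
  | @cons u w v k h _ ih =>
    obtain ⟨f, h0, hk, hf⟩ := ih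
    refine ⟨fun i => i.casesOn u f, rfl, hk, ?_⟩
    rintro (_ | i) hi
    · subst h0; exact h
    · exact hf i (by omega)

theorem exists_minimal (h : DirWalk A k u v) :
    ∃ l, DirWalk A l u v ∧ ∀ l', DirWalk A l' u v → l ≤ l' := by
  classical
  have hex : ∃ l, DirWalk A l u v := ⟨k, h⟩
  exact ⟨Nat.find hex, Nat.find_spec hex, fun _ hl => Nat.find_min' hex hl⟩

end DirWalk

theorem IsDirWalk.append {f g : ℕ → α} (hf : IsDirWalk A i f u w) (hg : IsDirWalk A j g w v) :
    IsDirWalk A (i + j) (fun t => if t < i then f t else g (t - i)) u v := by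
  obtain ⟨rfl, hfi, hf⟩ := hf
  obtain ⟨hg0, rfl, hg⟩ := hg
  refine ⟨?_, by simp, fun t ht => ?_⟩
  · rcases Nat.eq_zero_or_pos i with rfl | hi
    · simp only [lt_irrefl, if_false, Nat.sub_self]
      exact hg0.trans hfi.symm
    · simp only [hi, if_true]
  · rcases lt_trichotomy (t + 1) i with h | h | h
    · simpa only [h, show t < i by omega, if_true] using hf t (by omega)
    · simpa only [h, show t < i by omega, lt_irrefl, if_true, if_false, Nat.sub_self, hg0, ← hfi]
        using hf t (by omega)
    · simpa only [show ¬ t < i by omega, show ¬ t + 1 < i by omega, if_false,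
        show t + 1 - i = t - i + 1 by omega] using hg (t - i) (by omega)

/-- Closure under geodesics, phrased with walk lengths: `w` belongs to `S` as soon as it lies on
some shortest walk between two members of `S`. Unlike `DConvex` it allows `S` to be empty. -/
def WalkConvex (A : α → α → Prop) (S : Set α) : Prop :=
  ∀ ⦃u⦄, u ∈ S → ∀ ⦃v⦄, v ∈ S → ∀ ⦃w i j⦄, DirWalk A i u w → DirWalk A j w v →
    (∀ k, DirWalk A k u v → i + j ≤ k) → w ∈ S

theorem dconvex_iff : DConvex A S ↔ S.Nonempty ∧ WalkConvex A S := by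
  refine and_congr_right fun _ => ⟨fun h u hu v hv w i j huw hwv hmin => ?_,
    fun h u hu v hv k f hf t ht => ?_⟩
  · obtain ⟨f, hf⟩ := huw.exists_isDirWalk
    obtain ⟨g, hg⟩ := hwv.exists_isDirWalk
    have hgeod := h u hu v hv _ _
      ⟨hf.append hg, fun k _ hk => hmin k (.of_isDirWalk hk)⟩ i (by omega)
    simpa only [lt_irrefl, if_false, Nat.sub_self, hg.1] using hgeod
  · obtain ⟨⟨rfl, rfl, harc⟩, hmin⟩ := hf
    have hsplit : DirWalk A t (f 0) (f t) ∧ DirWalk A (k - t) (f t) (f k) :=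
      ⟨.of_isDirWalk (f := f) ⟨rfl, rfl, fun i hi => harc i (by omega)⟩,
        .of_isDirWalk (f := fun i => f (t + i))
          ⟨rfl, congrArg f (Nat.add_sub_cancel' ht), fun i hi => harc (t + i) (by omega)⟩⟩
    refine h hu hv hsplit.1 hsplit.2 fun l hl => ?_
    obtain ⟨g, hg⟩ := hl.exists_isDirWalk
    have := hmin l g hg
    omega

/-- The strong component of `o`. -/
def strongComponent (A : α → α → Prop) (o : α) : Set α :=
  {v | (∃ k, DirWalk A k o v) ∧ ∃ k, DirWalk A k v o}

theorem mem_strongComponent_self (A : α → α → Prop) (o : α) : o ∈ strongComponent A o :=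
  ⟨⟨0, .nil o⟩, ⟨0, .nil o⟩⟩

theorem walkConvex_strongComponent (A : α → α → Prop) (o : α) :
    WalkConvex A (strongComponent A o) := by
  rintro u ⟨⟨a, hou⟩, -⟩ v ⟨-, b, hvo⟩ w i j huw hwv -
  exact ⟨⟨_, hou.trans huw⟩, ⟨_, hwv.trans hvo⟩⟩

theorem exists_dirWalk_of_mem_strongComponent {o : α} (hu : u ∈ strongComponent A o)
    (hv : v ∈ strongComponent A o) : ∃ k, DirWalk A k u v := by
  obtain ⟨-, a, huo⟩ := hu
  obtain ⟨⟨b, hov⟩, -⟩ := hv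
  exact ⟨_, huo.trans hov⟩

/-- Every vertex of `S` has an out-neighbour and an in-neighbour in `S`: the subdigraph induced by
`S` has neither sources nor sinks. This is the part of convexity that the maximality arguments
use. -/
def SourceSinkFree (A : α → α → Prop) (S : Set α) : Prop :=
  ∀ u ∈ S, (∃ w ∈ S, A u w) ∧ ∃ w ∈ S, A w u

theorem WalkConvex.sourceSinkFree (hS : WalkConvex A S) (hnt : S.Nontrivial)
    (hconn : ∀ u ∈ S, ∀ v ∈ S, ∃ k, DirWalk A k u v) : SourceSinkFree A S := by
  intro u hu
  obtain ⟨v, hv, hvu⟩ := hnt.exists_ne u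
  constructor
  · obtain ⟨_, huv⟩ := hconn u hu v hv
    obtain ⟨_ | k, hk, hmin⟩ := huv.exists_minimal
    · exact absurd hk.eq_of_zero.symm hvu
    · obtain ⟨w, huw, hwv⟩ := hk.exists_cons
      exact ⟨w, hS hu hv (.single huw) hwv fun l hl => (by have := hmin l hl; omega), huw⟩
  · obtain ⟨_, hvu'⟩ := hconn v hv u hu
    obtain ⟨_ | k, hk, hmin⟩ := hvu'.exists_minimal
    · exact absurd hk.eq_of_zero hvu
    · obtain ⟨w, hvw, hwu⟩ := hk.exists_snoc
      exact ⟨w, hS hv hu hvw (.single hwu) hmin, hwu⟩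

theorem exists_mem_of_descent {T G : Set α} (f : α → ℕ) (hS : ∀ u ∈ S, ∃ w ∈ S, A u w)
    (hT : ∀ u ∈ T, ∀ w, A u w → w ∈ G ∨ w ∈ T ∧ f w < f u) (hu : u ∈ S) (huT : u ∈ T) :
    ∃ w ∈ S, w ∈ G := by
  induction hf : f u using Nat.strong_induction_on generalizing u with
  | _ _ ih =>
    obtain ⟨w, hw, huw⟩ := hS u hu
    obtain hwG | ⟨hwT, hlt⟩ := hT u huT w huw
    · exact ⟨w, hw, hwG⟩
    · exact ih _ (hf ▸ hlt) hw hwT rfl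

theorem mem_of_descent {T : Set α} {o : α} (f : α → ℕ) (hS : ∀ u ∈ S, ∃ w ∈ S, A u w)
    (hT : ∀ u ∈ T, ∀ w, A u w → w = o ∨ w ∈ T ∧ f w < f u) (hu : u ∈ S) (huT : u ∈ T) :
    o ∈ S := by
  obtain ⟨_, hw, rfl⟩ := exists_mem_of_descent (G := {o}) f hS hT hu huT
  exact hw

theorem DirWalk.exists_first_entry (φ : α → α → ℕ)
    (hφ : ∀ q ∈ C, ∀ x y, x ∉ C → A x y → φ q x ≤ φ q y + 1) (h : DirWalk A k w v)
    (hw : w ∉ C) (hv : v ∈ C) :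
    ∃ z q i j, z ∉ C ∧ q ∈ C ∧ A z q ∧ DirWalk A j q v ∧ i + j = k ∧ φ q w ≤ φ q q + i := by
  induction h with
  | nil => exact absurd hv hw
  | @cons w y v k hwy hyv ih =>
    by_cases hy : y ∈ C
    · exact ⟨w, y, 1, k, hw, hy, hwy, hyv, by omega, hφ y hy w y hw hwy⟩
    · obtain ⟨z, q, i, j, hz, hq, hzq, hqv, rfl, hle⟩ := ih hy hv
      have := hφ q hq w y hw hwy
      exact ⟨z, q, i + 1, j, hz, hq, hzq, hqv, by omega, by omega⟩

theorem DirWalk.exists_last_exit {φ : α → ℕ} (hφ : ∀ x y, x ∉ C → A x y → φ x ≤ φ y + 1)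
    (h : DirWalk A k u w) (hw : w ∉ C) :
    (u ∉ C ∧ φ u ≤ φ w + k) ∨
      ∃ p x i j, p ∈ C ∧ x ∉ C ∧ A p x ∧ DirWalk A i u p ∧ i + 1 + j = k ∧ φ x ≤ φ w + j := by
  induction h with
  | nil => exact .inl ⟨hw, le_rfl⟩
  | @cons u y w k huy hyw ih =>
    obtain ⟨hy, hle⟩ | ⟨p, x, i, j, hp, hx, hpx, hyp, rfl, hle⟩ := ih hw
    · by_cases hu : u ∈ C
      · exact .inr ⟨u, y, 0, k, hu, hy, huy, .nil u, by omega, hle⟩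
      · have := hφ u y hu huy
        exact .inl ⟨hu, by omega⟩
    · exact .inr ⟨p, x, i + 1, j, hp, hx, hpx, .cons huy hyp, by omega, hle⟩

/- `φ q` bounds below the length of a walk outside `C` that ends by entering `C` at `q`, so the
hypothesis says that an excursion outside `C` is never shorter than a walk between its end points;
cutting out the excursion then shortens any walk that leaves `C`. -/
theorem walkConvex_of_detours (φ : α → α → ℕ)
    (hφ : ∀ q ∈ C, ∀ x y, x ∉ C → A x y → φ q x ≤ φ q y + 1)
    (hdetour : ∀ p ∈ C, ∀ x ∉ C, A p x → ∀ z ∉ C, ∀ q ∈ C, A z q →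
      ∃ l, DirWalk A l p q ∧ φ q q + l ≤ φ q x) :
    WalkConvex A C := by
  intro u hu v hv w i j huw hwv hmin
  by_contra hw
  obtain ⟨z, q, j₁, j₂, hz, hq, hzq, hqv, rfl, hentry⟩ := hwv.exists_first_entry φ hφ hw hv
  obtain ⟨hu', -⟩ | ⟨p, x, i₁, i₂, hp, hx, hpx, hup, rfl, hexit⟩ :=
    huw.exists_last_exit (hφ q hq) hw
  · exact hu' hu
  · obtain ⟨l, hpq, hle⟩ := hdetour p hp x hx hpx z hz q hq hzq
    have := hmin _ ((hup.trans hpq).trans hqv)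
    omega

theorem DirWalk.map {ι : α → β} (h : DirWalk (InvImage B ι) k u v) : DirWalk B k (ι u) (ι v) := by
  induction h with
  | nil => exact .nil _
  | cons h _ ih => exact .cons h ih

section Transfer

variable {ι : α → β} (hι : ι.Injective) (hB : ∀ u q, B (ι u) q → q ∈ Set.range ι)
include hB

theorem DirWalk.mem_range {q : β} (h : DirWalk B k (ι u) q) : q ∈ Set.range ι := by
  induction k generalizing u with
  | zero => exact ⟨u, h.eq_of_zero⟩
  | succ k ih =>
    obtain ⟨w, huw, hwq⟩ := h.exists_cons
    obtain ⟨w, rfl⟩ := hB u w huw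
    exact ih hwq

include hι

theorem dirWalk_invImage_iff : DirWalk (InvImage B ι) k u v ↔ DirWalk B k (ι u) (ι v) := by
  refine ⟨.map, fun h => ?_⟩
  induction k generalizing u with
  | zero => exact hι h.eq_of_zero ▸ .nil u
  | succ k ih =>
    obtain ⟨w, huw, hwv⟩ := h.exists_cons
    obtain ⟨w, rfl⟩ := hB u w huw
    exact .cons huw (ih hwv)

theorem WalkConvex.preimage {D : Set β} (hD : WalkConvex B D) :
    WalkConvex (InvImage B ι) (ι ⁻¹' D) := by
  intro u hu v hv w i j huw hwv hmin
  exact hD hu hv huw.map hwv.map fun k hk => hmin k ((dirWalk_invImage_iff hι hB).2 hk)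

theorem WalkConvex.image (hS : WalkConvex (InvImage B ι) S) : WalkConvex B (ι '' S) := by
  rintro _ ⟨u, hu, rfl⟩ _ ⟨v, hv, rfl⟩ w i j huw hwv hmin
  obtain ⟨w, rfl⟩ := huw.mem_range hB
  have transfer {k u v} := (dirWalk_invImage_iff hι hB (k := k) (u := u) (v := v)).2
  exact ⟨w, hS hu hv (transfer huw) (transfer hwv) fun k hk => hmin k hk.map, rfl⟩

theorem convexityNumber_invImage_eq_card [Fintype α] {C : Finset β} (hne : C.Nonempty)
    (hsub : (C : Set β) ⊆ Set.range ι) (hproper : ¬ Set.range ι ⊆ C) (hC : WalkConvex B C)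
    (hmax : ∀ S ⊆ Set.range ι, WalkConvex B S → Set.range ι ⊆ S ∨ S.ncard ≤ C.card) :
    convexityNumber (InvImage B ι) = C.card := by
  refine IsGreatest.csSup_eq ⟨⟨ι ⁻¹' C, dconvex_iff.2 ⟨?_, hC.preimage hι hB⟩, ?_, ?_⟩, ?_⟩
  · obtain ⟨c, hc⟩ := hne
    obtain ⟨p, rfl⟩ := hsub hc
    exact ⟨p, hc⟩
  · rwa [Ne, Set.preimage_eq_univ_iff]
  · rw [← Set.ncard_image_of_injective _ hι, Set.image_preimage_eq_of_subset hsub,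
      Set.ncard_coe_finset]
  · rintro k ⟨S, hS, hSne, rfl⟩
    rw [← Set.ncard_image_of_injective _ hι]
    refine (hmax _ (Set.image_subset_range ι S) ((dconvex_iff.1 hS).2.image hι hB)).resolve_left
      fun h => hSne (Set.eq_univ_of_forall fun p => ?_)
    exact hι.mem_set_image.1 (h ⟨p, rfl⟩)

end Transfer

section Iso

theorem DConvex.preimage_equiv {D : Set β} (e : α ≃ β) (hD : DConvex B D) :
    DConvex (InvImage B e) (e ⁻¹' D) := by
  rw [dconvex_iff] at hD ⊢
  exact ⟨hD.1.preimage e.surjective,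
    hD.2.preimage e.injective fun _ q _ => e.surjective q⟩

theorem dconvex_preimage_equiv_iff {D : Set β} (e : α ≃ β) :
    DConvex (InvImage B e) (e ⁻¹' D) ↔ DConvex B D := by
  refine ⟨fun h => ?_, .preimage_equiv e⟩
  have hD : DConvex (fun p q => B (e (e.symm p)) (e (e.symm q))) (e.symm ⁻¹' (e ⁻¹' D)) :=
    h.preimage_equiv e.symm
  simpa only [e.apply_symm_apply, e.symm_preimage_preimage] using hD

theorem convexityNumber_invImage_equiv [Fintype α] [Fintype β] (e : α ≃ β) :
    convexityNumber (InvImage B e) = convexityNumber B := by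
  refine congrArg sSup (Set.ext fun k => ?_)
  simp only [Set.mem_ofPred_eq, e.injective.preimage_surjective.exists,
    dconvex_preimage_equiv_iff, Ne, Set.preimage_eq_univ_iff, e.range_eq_univ, Set.univ_subset_iff]
  simp only [Set.ncard_preimage_of_injective_subset_range e.injective
    (e.range_eq_univ ▸ Set.subset_univ _)]

theorem IsOrientation.invImage {G : SimpleGraph α} {H : SimpleGraph β} (e : G ≃g H)
    (hB : IsOrientation H B) : IsOrientation G (InvImage B e) :=
  ⟨fun _ _ h => e.map_adj_iff.1 (hB.1 _ _ h), fun _ _ h => hB.2.1 _ _ (e.map_adj_iff.2 h),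
    fun _ _ => hB.2.2 _ _⟩

theorem strongConvexitySpectrum_subset_of_iso [Fintype α] [Fintype β] {G : SimpleGraph α}
    {H : SimpleGraph β} (e : G ≃g H) : strongConvexitySpectrum H ⊆ strongConvexitySpectrum G := by
  rintro _ ⟨B, hB, hstrong, rfl⟩
  refine ⟨_, hB.invImage e, fun u v => ?_, convexityNumber_invImage_equiv e.toEquiv⟩
  obtain ⟨k, f, hf⟩ := hstrong (e u) (e v)
  have hwalk : DirWalk (InvImage B e) k u v :=
    (dirWalk_invImage_iff e.injective fun _ q _ => e.surjective q).2 (.of_isDirWalk hf)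
  exact ⟨k, hwalk.exists_isDirWalk⟩

end Iso

end Walks

/-! ### Orientations of grids -/

section Grid

/-- The vertex set of the `n × m` grid, as a set of points of `ℕ × ℕ`. -/
def gridBox (n m : ℕ) : Set (ℕ × ℕ) := {p | p.1 < n ∧ p.2 < m}

/-- Manhattan distance, the distance in the undirected grid. -/
def manhattan (p q : ℕ × ℕ) : ℕ := Nat.dist p.1 q.1 + Nat.dist p.2 q.2

/-- The orientations of all grid edges of the quadrant `ℕ × ℕ`: `right x y` says that the edge
between `(x, y)` and `(x, y + 1)` is directed towards `(x, y + 1)`, and `up x y` that the edge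
between `(x, y)` and `(x + 1, y)` is directed towards `(x + 1, y)`. The first coordinate is drawn
vertically. -/
structure GridOrientation where
  right : ℕ → ℕ → Prop
  up : ℕ → ℕ → Prop

variable {O : GridOrientation} {n m : ℕ} {p q : ℕ × ℕ} {S : Set (ℕ × ℕ)}

namespace GridOrientation

/-- The arcs of the orientation of the `n × m` grid given by `O`. -/
def Arc (O : GridOrientation) (n m : ℕ) (p q : ℕ × ℕ) : Prop :=
  (p ∈ gridBox n m ∧ q ∈ gridBox n m) ∧
    (p.1 = q.1 ∧ p.2 + 1 = q.2 ∧ O.right p.1 p.2 ∨ p.1 = q.1 ∧ q.2 + 1 = p.2 ∧ ¬ O.right q.1 q.2 ∨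
      p.2 = q.2 ∧ p.1 + 1 = q.1 ∧ O.up p.1 p.2 ∨ p.2 = q.2 ∧ q.1 + 1 = p.1 ∧ ¬ O.up q.1 q.2)

theorem arc_mk_iff {a b x y : ℕ} : O.Arc n m (a, b) (x, y) ↔
    ((a < n ∧ b < m) ∧ x < n ∧ y < m) ∧ (a = x ∧ b + 1 = y ∧ O.right a b ∨
      a = x ∧ y + 1 = b ∧ ¬ O.right x y ∨ b = y ∧ a + 1 = x ∧ O.up a b ∨
      b = y ∧ x + 1 = a ∧ ¬ O.up x y) :=
  Iff.rfl

theorem Arc.manhattan_eq_one (h : O.Arc n m p q) : manhattan p q = 1 := by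
  obtain ⟨-, h⟩ := h
  simp only [manhattan, Nat.dist]
  omega

theorem arc_or_arc (hp : p ∈ gridBox n m) (hq : q ∈ gridBox n m) (h : manhattan p q = 1) :
    O.Arc n m p q ∨ O.Arc n m q p := by
  obtain ⟨x, y⟩ := p
  obtain ⟨x', y'⟩ := q
  simp only [manhattan, Nat.dist] at h
  have hcases : x = x' ∧ y' = y + 1 ∨ x = x' ∧ y = y' + 1 ∨ y = y' ∧ x' = x + 1 ∨
      y = y' ∧ x = x' + 1 := by omega
  simp only [Arc, hp, hq, true_and]
  obtain ⟨rfl, rfl⟩ | ⟨rfl, rfl⟩ | ⟨rfl, rfl⟩ | ⟨rfl, rfl⟩ := hcases <;> grind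

theorem Arc.not_arc (h : O.Arc n m p q) : ¬ O.Arc n m q p := by
  rintro ⟨-, h'⟩
  obtain ⟨-, h⟩ := h
  obtain ⟨x, y⟩ := p
  obtain ⟨x', y'⟩ := q
  grind

variable {x y z : ℕ}

theorem arc_right (hx : x < n) (hy : y + 1 < m) (h : O.right x y) :
    O.Arc n m (x, y) (x, y + 1) :=
  ⟨⟨⟨hx, Nat.lt_of_succ_lt hy⟩, ⟨hx, hy⟩⟩, .inl ⟨rfl, rfl, h⟩⟩

theorem arc_left (hx : x < n) (hy : y + 1 < m) (h : ¬ O.right x y) :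
    O.Arc n m (x, y + 1) (x, y) :=
  ⟨⟨⟨hx, hy⟩, ⟨hx, Nat.lt_of_succ_lt hy⟩⟩, .inr (.inl ⟨rfl, rfl, h⟩)⟩

theorem arc_up (hx : x + 1 < n) (hy : y < m) (h : O.up x y) : O.Arc n m (x, y) (x + 1, y) :=
  ⟨⟨⟨Nat.lt_of_succ_lt hx, hy⟩, ⟨hx, hy⟩⟩, .inr (.inr (.inl ⟨rfl, rfl, h⟩))⟩

theorem arc_down (hx : x + 1 < n) (hy : y < m) (h : ¬ O.up x y) :
    O.Arc n m (x + 1, y) (x, y) :=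
  ⟨⟨⟨hx, hy⟩, ⟨Nat.lt_of_succ_lt hx, hy⟩⟩, .inr (.inr (.inr ⟨rfl, rfl, h⟩))⟩

theorem dirWalk_right (hx : x < n) (hz : z < m) (hyz : y ≤ z)
    (h : ∀ t, y ≤ t → t < z → O.right x t) : DirWalk (O.Arc n m) (z - y) (x, y) (x, z) := by
  induction z, hyz using Nat.le_induction with
  | base => exact (DirWalk.nil _).cast (by omega)
  | succ z hyz ih =>
    exact ((ih (by omega) fun t h₁ h₂ => h t h₁ (by omega)).snoc
      (arc_right hx hz (h z hyz (by omega)))).cast (by omega)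

theorem dirWalk_left (hx : x < n) (hz : z < m) (hyz : y ≤ z)
    (h : ∀ t, y ≤ t → t < z → ¬ O.right x t) : DirWalk (O.Arc n m) (z - y) (x, z) (x, y) := by
  induction z, hyz using Nat.le_induction with
  | base => exact (DirWalk.nil _).cast (by omega)
  | succ z hyz ih =>
    exact (DirWalk.cons (arc_left hx hz (h z hyz (by omega)))
      (ih (by omega) fun t h₁ h₂ => h t h₁ (by omega))).cast (by omega)

theorem dirWalk_up (hy : y < m) (hz : z < n) (hxz : x ≤ z)
    (h : ∀ t, x ≤ t → t < z → O.up t y) : DirWalk (O.Arc n m) (z - x) (x, y) (z, y) := by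
  induction z, hxz using Nat.le_induction with
  | base => exact (DirWalk.nil _).cast (by omega)
  | succ z hxz ih =>
    exact ((ih (by omega) fun t h₁ h₂ => h t h₁ (by omega)).snoc
      (arc_up hz hy (h z hxz (by omega)))).cast (by omega)

theorem dirWalk_down (hy : y < m) (hz : z < n) (hxz : x ≤ z)
    (h : ∀ t, x ≤ t → t < z → ¬ O.up t y) : DirWalk (O.Arc n m) (z - x) (z, y) (x, y) := by
  induction z, hxz using Nat.le_induction with
  | base => exact (DirWalk.nil _).cast (by omega)
  | succ z hxz ih =>
    exact (DirWalk.cons (arc_down hz hy (h z hxz (by omega)))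
      (ih (by omega) fun t h₁ h₂ => h t h₁ (by omega))).cast (by omega)

/-- The unit square with corners `(x, y)` and `(x + 1, y + 1)` is a directed 4-cycle. -/
def CyclicSquare (O : GridOrientation) (x y : ℕ) : Prop :=
  (O.right x y ∧ O.up x (y + 1) ∧ ¬ O.right (x + 1) y ∧ ¬ O.up x y) ∨
    (¬ O.right x y ∧ ¬ O.up x (y + 1) ∧ O.right (x + 1) y ∧ O.up x y)

end GridOrientation

open GridOrientation

theorem manhattan_triangle (p q r : ℕ × ℕ) : manhattan p r ≤ manhattan p q + manhattan q r := by
  simp only [manhattan, Nat.dist]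
  omega

namespace DirWalk

variable {k : ℕ}

theorem manhattan_le (h : DirWalk (O.Arc n m) k p q) : manhattan p q ≤ k := by
  have hpot := h.potential_le (φ := (manhattan · q)) fun a b hab => by
    rw [add_comm, ← hab.manhattan_eq_one]
    exact manhattan_triangle a b q
  simpa [manhattan] using hpot

theorem parity (h : DirWalk (O.Arc n m) k p q) : (p.1 + p.2 + k + q.1 + q.2) % 2 = 0 := by
  induction h with
  | nil u => omega
  | cons h _ ih =>
    have := h.2
    omega

end DirWalk

theorem unitSquare_subset_iff {x y : ℕ} : Set.Icc (x, y) (x + 1, y + 1) ⊆ S ↔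
    (x, y) ∈ S ∧ (x, y + 1) ∈ S ∧ (x + 1, y) ∈ S ∧ (x + 1, y + 1) ∈ S := by
  refine ⟨fun h => ⟨h ?_, h ?_, h ?_, h ?_⟩, ?_⟩
  iterate 4 simp only [Set.mem_Icc, Prod.mk_le_mk]; omega
  rintro h ⟨a, b⟩ hab
  simp only [Set.mem_Icc, Prod.mk_le_mk] at hab
  obtain rfl | rfl : x = a ∨ x + 1 = a := by omega
  all_goals obtain rfl | rfl : y = b ∨ y + 1 = b := by omega
  all_goals simp only [h]

namespace WalkConvex

theorem mem_of_add_le_manhattan (hS : WalkConvex (O.Arc n m) S) {w : ℕ × ℕ} {i j : ℕ} (hp : p ∈ S)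
    (hq : q ∈ S) (hpw : DirWalk (O.Arc n m) i p w) (hwq : DirWalk (O.Arc n m) j w q)
    (hle : i + j ≤ manhattan p q) : w ∈ S :=
  hS hp hq hpw hwq fun _ hk => hle.trans hk.manhattan_le

theorem mem_of_directed_square (hS : WalkConvex (O.Arc n m) S) {r s : ℕ × ℕ}
    (hpq : O.Arc n m p q) (hqr : O.Arc n m q r) (hrs : O.Arc n m r s) (hsp : O.Arc n m s p)
    (hp : p ∈ S) (hq : q ∈ S) : r ∈ S ∧ s ∈ S := by
  have three_le : ∀ k, DirWalk (O.Arc n m) k q p → 3 ≤ k := by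
    intro k hk
    have hpar := hk.parity
    have hpar' := (DirWalk.single hpq).parity
    have hk1 : k ≠ 1 := by
      rintro rfl
      obtain ⟨t, hqt, htp⟩ := hk.exists_cons
      exact hpq.not_arc (htp.eq_of_zero ▸ hqt)
    omega
  exact ⟨hS hq hp (.single hqr) (.cons hrs (.single hsp)) three_le,
    hS hq hp (.cons hqr (.single hrs)) (.single hsp) three_le⟩

theorem square_subset (hS : WalkConvex (O.Arc n m) S) {x y : ℕ} (hxy : O.CyclicSquare x y)
    (hx : x + 1 < n) (hy : y + 1 < m) (hpq : O.Arc n m p q) (hp : p ∈ S) (hq : q ∈ S)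
    (hpI : p ∈ Set.Icc (x, y) (x + 1, y + 1)) (hqI : q ∈ Set.Icc (x, y) (x + 1, y + 1)) :
    Set.Icc (x, y) (x + 1, y + 1) ⊆ S := by
  have hedge : ((x, y) ∈ S ∧ (x + 1, y) ∈ S) ∨ ((x, y) ∈ S ∧ (x, y + 1) ∈ S) ∨
      ((x + 1, y) ∈ S ∧ (x + 1, y + 1) ∈ S) ∨ ((x, y + 1) ∈ S ∧ (x + 1, y + 1) ∈ S) := by
    obtain ⟨a, b⟩ := p
    obtain ⟨c, d⟩ := q
    have hadj := hpq.manhattan_eq_one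
    simp only [manhattan, Nat.dist] at hadj
    simp only [Set.mem_Icc, Prod.mk_le_mk] at hpI hqI
    obtain rfl | rfl : x = a ∨ x + 1 = a := by omega
    all_goals obtain rfl | rfl : y = b ∨ y + 1 = b := by omega
    all_goals obtain rfl | rfl : x = c ∨ x + 1 = c := by omega
    all_goals obtain rfl | rfl : y = d ∨ y + 1 = d := by omega
    all_goals first | omega | simp only [hp, hq, true_and, true_or, or_true]
  rw [unitSquare_subset_iff]
  obtain ⟨h₁, h₂, h₃, h₄⟩ | ⟨h₁, h₂, h₃, h₄⟩ := hxy
  · have bottom : O.Arc n m (x, y) (x, y + 1) := arc_right (by omega) hy h₁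
    have right : O.Arc n m (x, y + 1) (x + 1, y + 1) := arc_up hx hy h₂
    have top : O.Arc n m (x + 1, y + 1) (x + 1, y) := arc_left hx hy h₃
    have left : O.Arc n m (x + 1, y) (x, y) := arc_down hx (by omega) h₄
    have := hS.mem_of_directed_square bottom right top left
    have := hS.mem_of_directed_square right top left bottom
    have := hS.mem_of_directed_square top left bottom right
    have := hS.mem_of_directed_square left bottom right top
    grind
  · have bottom : O.Arc n m (x, y + 1) (x, y) := arc_left (by omega) hy h₁
    have left : O.Arc n m (x, y) (x + 1, y) := arc_up hx (by omega) h₄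
    have top : O.Arc n m (x + 1, y) (x + 1, y + 1) := arc_right hx hy h₃
    have right : O.Arc n m (x + 1, y + 1) (x, y + 1) := arc_down hx hy h₂
    have := hS.mem_of_directed_square bottom left top right
    have := hS.mem_of_directed_square left top right bottom
    have := hS.mem_of_directed_square top right bottom left
    have := hS.mem_of_directed_square right bottom left top
    grind

end WalkConvex

theorem iff_of_forall_iff_succ {P : ℕ → Prop} {a b : ℕ}
    (h : ∀ t, a ≤ t → t < b → (P t ↔ P (t + 1))) (hab : a ≤ b) : P a ↔ P b := by
  induction b, hab using Nat.le_induction with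
  | base => rfl
  | succ b hab ih => exact (ih fun t h₁ h₂ => h t h₁ (by omega)).trans (h b hab (by omega))

theorem of_forall_iff_succ {P : ℕ → Prop} {a b s t : ℕ}
    (h : ∀ t, a ≤ t → t + 1 < b → (P t ↔ P (t + 1))) (hs : a ≤ s) (hsb : s < b) (ht : a ≤ t)
    (htb : t < b) (hP : P s) : P t := by
  obtain hst | hts := le_total s t
  · exact (iff_of_forall_iff_succ (fun r h₁ h₂ => h r (by omega) (by omega)) hst).1 hP
  · exact (iff_of_forall_iff_succ (fun r h₁ h₂ => h r (by omega) (by omega)) hts).2 hP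

namespace WalkConvex

variable {x y r₀ r₁ c₀ c₁ : ℕ}

theorem square_subset_iff_succ_left (hS : WalkConvex (O.Arc n m) S) (h₁ : O.CyclicSquare x y)
    (h₂ : O.CyclicSquare (x + 1) y) (hx : x + 2 < n) (hy : y + 1 < m) :
    Set.Icc (x, y) (x + 1, y + 1) ⊆ S ↔ Set.Icc (x + 1, y) (x + 2, y + 1) ⊆ S := by
  obtain h | h := O.arc_or_arc (n := n) (m := m) (p := (x + 1, y)) (q := (x + 1, y + 1))
    ⟨by omega, by omega⟩ ⟨by omega, by omega⟩ (by simp [manhattan, Nat.dist])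
  all_goals
    constructor <;> intro hsub <;>
      [refine hS.square_subset h₂ (by omega) hy h (hsub ?_) (hsub ?_) ?_ ?_;
       refine hS.square_subset h₁ (by omega) hy h (hsub ?_) (hsub ?_) ?_ ?_] <;>
      simp only [Set.mem_Icc, Prod.mk_le_mk] <;> omega

theorem square_subset_iff_succ_right (hS : WalkConvex (O.Arc n m) S) (h₁ : O.CyclicSquare x y)
    (h₂ : O.CyclicSquare x (y + 1)) (hx : x + 1 < n) (hy : y + 2 < m) :
    Set.Icc (x, y) (x + 1, y + 1) ⊆ S ↔ Set.Icc (x, y + 1) (x + 1, y + 2) ⊆ S := by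
  obtain h | h := O.arc_or_arc (n := n) (m := m) (p := (x, y + 1)) (q := (x + 1, y + 1))
    ⟨by omega, by omega⟩ ⟨by omega, by omega⟩ (by simp [manhattan, Nat.dist])
  all_goals
    constructor <;> intro hsub <;>
      [refine hS.square_subset h₂ hx (by omega) h (hsub ?_) (hsub ?_) ?_ ?_;
       refine hS.square_subset h₁ hx (by omega) h (hsub ?_) (hsub ?_) ?_ ?_] <;>
      simp only [Set.mem_Icc, Prod.mk_le_mk] <;> omega

/- Consecutive cyclic squares share an edge, so a convex set that contains one of them contains the
next one. -/
theorem rectangle_subset (hS : WalkConvex (O.Arc n m) S)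
    (hcyc : ∀ x y, r₀ ≤ x → x < r₁ → c₀ ≤ y → y < c₁ → O.CyclicSquare x y) (hr : r₁ < n)
    (hc : c₁ < m) (hpq : O.Arc n m p q) (hp : p ∈ S) (hq : q ∈ S)
    (hpI : p ∈ Set.Icc (x, y) (x + 1, y + 1)) (hqI : q ∈ Set.Icc (x, y) (x + 1, y + 1))
    (hx : r₀ ≤ x) (hx' : x < r₁) (hy : c₀ ≤ y) (hy' : y < c₁) :
    Set.Icc (r₀, c₀) (r₁, c₁) ⊆ S := by
  have hstart : Set.Icc (x, y) (x + 1, y + 1) ⊆ S :=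
    hS.square_subset (hcyc x y hx hx' hy hy') (by omega) (by omega) hpq hp hq hpI hqI
  have hsquare : ∀ a, r₀ ≤ a → a < r₁ → ∀ b, c₀ ≤ b → b < c₁ →
      Set.Icc (a, b) (a + 1, b + 1) ⊆ S := by
    intro a ha ha' b hb hb'
    have hcolumn : Set.Icc (a, y) (a + 1, y + 1) ⊆ S :=
      of_forall_iff_succ (P := fun t => Set.Icc (t, y) (t + 1, y + 1) ⊆ S)
        (fun t h₁ h₂ => hS.square_subset_iff_succ_left (hcyc t y h₁ (by omega) hy hy')
          (hcyc (t + 1) y (by omega) h₂ hy hy') (by omega) (by omega)) hx hx' ha ha' hstart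
    exact of_forall_iff_succ (P := fun t => Set.Icc (a, t) (a + 1, t + 1) ⊆ S)
      (fun t h₁ h₂ => hS.square_subset_iff_succ_right (hcyc a t ha ha' h₁ (by omega))
        (hcyc a (t + 1) ha ha' (by omega) h₂) (by omega) (by omega)) hy hy' hb hb' hcolumn
  rintro ⟨a, b⟩ hab
  simp only [Set.mem_Icc, Prod.mk_le_mk] at hab
  refine hsquare (min a (r₁ - 1)) (by omega) (by omega) (min b (c₁ - 1)) (by omega) (by omega) ?_
  simp only [Set.mem_Icc, Prod.mk_le_mk]
  omega

end WalkConvex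

/-- The inclusion of the vertex set of `gridGraph n m` into `ℕ × ℕ`. -/
def gridEmbedding (n m : ℕ) (p : Fin n × Fin m) : ℕ × ℕ := (p.1, p.2)

theorem gridEmbedding_injective (n m : ℕ) : (gridEmbedding n m).Injective :=
  Fin.val_injective.prodMap Fin.val_injective

theorem range_gridEmbedding (n m : ℕ) : Set.range (gridEmbedding n m) = gridBox n m := by
  ext ⟨x, y⟩
  exact ⟨fun ⟨p, hp⟩ => hp ▸ ⟨p.1.2, p.2.2⟩, fun h => ⟨(⟨x, h.1⟩, ⟨y, h.2⟩), rfl⟩⟩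

theorem gridGraph_adj_iff {p q : Fin n × Fin m} :
    (gridGraph n m).Adj p q ↔ manhattan (gridEmbedding n m p) (gridEmbedding n m q) = 1 := by
  simp only [gridGraph, SimpleGraph.boxProd_adj, SimpleGraph.pathGraph_adj, Fin.ext_iff, manhattan,
    gridEmbedding, Nat.dist]
  omega

theorem GridOrientation.isOrientation (O : GridOrientation) (n m : ℕ) :
    IsOrientation (gridGraph n m) (InvImage (O.Arc n m) (gridEmbedding n m)) := by
  have hbox p : gridEmbedding n m p ∈ gridBox n m := range_gridEmbedding n m ▸ ⟨p, rfl⟩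
  exact ⟨fun _ _ h => gridGraph_adj_iff.2 h.manhattan_eq_one,
    fun p q h => arc_or_arc (hbox p) (hbox q) (gridGraph_adj_iff.1 h), fun _ _ h => h.not_arc⟩

theorem GridOrientation.card_mem_strongConvexitySpectrum (O : GridOrientation) {o : ℕ × ℕ}
    {C : Finset (ℕ × ℕ)} (hCne : C.Nonempty) (hCbox : (C : Set (ℕ × ℕ)) ⊆ gridBox n m)
    (hproper : ¬ gridBox n m ⊆ C) (hstrong : gridBox n m ⊆ strongComponent (O.Arc n m) o)
    (hC : WalkConvex (O.Arc n m) C)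
    (hmax : ∀ S ⊆ gridBox n m, WalkConvex (O.Arc n m) S → SourceSinkFree (O.Arc n m) S →
      ¬ S ⊆ C → gridBox n m ⊆ S ∨ S.ncard ≤ C.card) :
    C.card ∈ strongConvexitySpectrum (gridGraph n m) := by
  have hinj := gridEmbedding_injective n m
  have hrange := range_gridEmbedding n m
  have hB : ∀ u q, O.Arc n m (gridEmbedding n m u) q → q ∈ Set.range (gridEmbedding n m) :=
    fun _ _ h => hrange ▸ h.1.2
  refine ⟨_, O.isOrientation n m, fun u v => ?_, ?_⟩
  · obtain ⟨k, hk⟩ := exists_dirWalk_of_mem_strongComponent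
      (hstrong (hrange ▸ Set.mem_range_self u)) (hstrong (hrange ▸ Set.mem_range_self v))
    exact ⟨k, ((dirWalk_invImage_iff hinj hB).2 hk).exists_isDirWalk⟩
  · refine convexityNumber_invImage_eq_card hinj hB hCne (hrange ▸ hCbox) (hrange ▸ hproper) hC ?_
    rw [hrange]
    intro S hSbox hS
    by_cases hSC : S ⊆ C
    · exact .inr (Set.ncard_coe_finset C ▸ Set.ncard_le_ncard hSC C.finite_toSet)
    obtain hsub | hnt := S.subsingleton_or_nontrivial
    · exact .inr ((Set.ncard_le_one hsub.finite |>.2 hsub).trans hCne.card_pos)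
    · exact hmax S hSbox hS (hS.sourceSinkFree hnt fun u hu v hv =>
        exists_dirWalk_of_mem_strongComponent (hstrong (hSbox hu)) (hstrong (hSbox hv))) hSC

end Grid

/-! ### Staircases -/

section Wall

open GridOrientation

variable {O : GridOrientation} {n m w : ℕ} {p q : ℕ × ℕ} {S : Set (ℕ × ℕ)}

theorem GridOrientation.CyclicSquare.exists_arc_mem_strongComponent {x y : ℕ}
    (h : O.CyclicSquare x y) (hx : x + 1 < n) (hy : y + 1 < m) :
    ∃ a b, O.Arc n m (a, b) (x, y) ∧ (a, b) ∈ strongComponent (O.Arc n m) (x, y) ∧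
      (a, b) ∈ Set.Icc (x, y) (x + 1, y + 1) := by
  simp only [Set.mem_Icc, Prod.mk_le_mk]
  obtain ⟨h₁, h₂, h₃, h₄⟩ | ⟨h₁, h₂, h₃, h₄⟩ := h
  · have last : O.Arc n m (x + 1, y) (x, y) := arc_down hx (by omega) h₄
    exact ⟨x + 1, y, last, ⟨⟨_, .cons (arc_right (by omega) hy h₁)
      (.cons (arc_up hx hy h₂) (.single (arc_left hx hy h₃)))⟩, ⟨_, .single last⟩⟩, by omega⟩
  · have last : O.Arc n m (x, y + 1) (x, y) := arc_left (by omega) hy h₁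
    exact ⟨x, y + 1, last, ⟨⟨_, .cons (arc_up hx (by omega) h₄)
      (.cons (arc_right hx hy h₃) (.single (arc_down hx hy h₂)))⟩, ⟨_, .single last⟩⟩, by omega⟩

theorem WalkConvex.wall_subset (hS : WalkConvex (O.Arc n m) S)
    (hcyc : ∀ x y, w ≤ y → O.CyclicSquare x y) (hn : 2 ≤ n) (hm : w + 2 ≤ m)
    (hpq : O.Arc n m p q) (hp : p ∈ S) (hq : q ∈ S) (hwp : w ≤ p.2) (hwq : w ≤ q.2) {x y : ℕ}
    (hx : x < n) (hy : w ≤ y) (hym : y < m) : (x, y) ∈ S := by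
  obtain ⟨a, b⟩ := p
  obtain ⟨c, d⟩ := q
  obtain ⟨⟨⟨_, _⟩, _, _⟩, h⟩ := id hpq
  dsimp only at *
  refine hS.rectangle_subset (r₀ := 0) (r₁ := n - 1) (c₀ := w) (c₁ := m - 1)
    (x := min (min a c) (n - 2)) (y := min (min b d) (m - 2)) (fun s t _ _ ht _ => hcyc s t ht)
    (by omega) (by omega) hpq hp hq ?_ ?_ (by omega) (by omega) (by omega) (by omega) ?_
  all_goals simp only [Set.mem_Icc, Prod.mk_le_mk]; omega

theorem wall_subset_strongComponent (hcyc : ∀ x y, w ≤ y → O.CyclicSquare x y) (hn : 2 ≤ n)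
    (hm : w + 2 ≤ m) {x y : ℕ} (hx : x < n) (hy : w ≤ y) (hym : y < m) :
    (x, y) ∈ strongComponent (O.Arc n m) (0, w) := by
  obtain ⟨a, b, harc, hmem, hab⟩ := (hcyc 0 w le_rfl).exists_arc_mem_strongComponent
    (n := n) (m := m) (by omega) (by omega)
  simp only [Set.mem_Icc, Prod.mk_le_mk] at hab
  exact (walkConvex_strongComponent _ _).wall_subset hcyc hn hm harc hmem
    (mem_strongComponent_self _ _) hab.1.2 le_rfl hx hy hym

end Wall

section Staircase

open GridOrientation

/-- The row lengths `c 0, c 1, …` of a staircase: the region `{(x, y) | y < c x}` has two full rows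
of length `e + 2`, a third row of length at least `e + 1`, and no row of length one. -/
structure IsStaircase (e : ℕ) (c : ℕ → ℕ) : Prop where
  zero : c 0 = e + 2
  one : c 1 = e + 2
  le_two : e + 1 ≤ c 2
  antitone : ∀ x, c (x + 1) ≤ c x
  ne_one : ∀ x, c x ≠ 1

/-- The orientation in which the staircase with row lengths `c` is a maximum convex set. Right of
the staircase's widest rows every unit square is cyclic; the only arc leaving the staircase is
`(0, e + 1) → (0, e + 2)`. -/
def staircaseOrientation (e : ℕ) (c : ℕ → ℕ) : GridOrientation where
  right x y := e + 2 ≤ y ∧ (x + y + e) % 2 = 0 ∨ y = e + 1 ∧ x = 0 ∨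
    y ≤ e ∧ (x = 0 ∧ (y + e) % 2 = 1 ∨ x = 1 ∧ (y + e) % 2 = 0 ∨ x = 2 ∧ y = e ∧ c 2 = e + 2)
  up x y := e + 2 ≤ y ∧ (x + y + e) % 2 = 1 ∨
    y ≤ e + 1 ∧ (x = 0 ∧ (y + e) % 2 = 0 ∨ x = 1 ∧ y = e ∨
      2 ≤ x ∧ 2 ≤ c (x + 1) ∧ y + 1 = c (x + 1))

/-- The vertices of the staircase with row lengths `c` in the `n × m` grid. -/
def staircase (n m : ℕ) (c : ℕ → ℕ) : Finset (ℕ × ℕ) :=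
  (Finset.range n ×ˢ Finset.range m).filter fun p => p.2 < c p.1

namespace IsStaircase

variable {n m e x y : ℕ} {c : ℕ → ℕ} {S : Set (ℕ × ℕ)}

theorem le (h : IsStaircase e c) (x : ℕ) : c x ≤ e + 2 := by
  induction x with
  | zero => exact h.zero.le
  | succ x ih => exact (h.antitone x).trans ih

theorem mem_staircase (h : IsStaircase e c) (hm : e + 2 ≤ m) :
    (x, y) ∈ (staircase n m c : Set (ℕ × ℕ)) ↔ x < n ∧ y < c x := by
  have := h.le x
  simp only [staircase, Finset.coe_filter, Finset.mem_product, Finset.mem_range,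
    Set.mem_ofPred_eq]
  omega

theorem card_staircase (h : IsStaircase e c) (hm : e + 2 ≤ m) :
    (staircase n m c).card = ∑ x ∈ Finset.range n, c x := by
  rw [staircase, Finset.card_filter, Finset.sum_product]
  refine Finset.sum_congr rfl fun x _ => ?_
  have hrow : (Finset.range m).filter (· < c x) = Finset.range (c x) := by
    ext y
    have := h.le x
    simp only [Finset.mem_filter, Finset.mem_range]
    omega
  rw [← Finset.card_filter, hrow, Finset.card_range]

theorem cyclicSquare_wall (x y : ℕ) (hy : e + 2 ≤ y) :
    (staircaseOrientation e c).CyclicSquare x y := by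
  obtain hpar | hpar := Nat.mod_two_eq_zero_or_one (x + y + e)
  · refine .inl ⟨?_, ?_, ?_, ?_⟩ <;> dsimp only [staircaseOrientation] <;> omega
  · refine .inr ⟨?_, ?_, ?_, ?_⟩ <;> dsimp only [staircaseOrientation] <;> omega

theorem cyclicSquare_base (y : ℕ) (hy : y ≤ e) :
    (staircaseOrientation e c).CyclicSquare 0 y := by
  obtain hpar | hpar := Nat.mod_two_eq_zero_or_one (y + e)
  · refine .inr ⟨?_, ?_, ?_, ?_⟩ <;> dsimp only [staircaseOrientation] <;> omega
  · refine .inl ⟨?_, ?_, ?_, ?_⟩ <;> dsimp only [staircaseOrientation] <;> omega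

local notation "𝓐" => Arc (staircaseOrientation e c) n m

theorem dirWalk_left_of_three_le (hx : 3 ≤ x) (hxn : x < n) (hm : e + 2 < m) (hy : y ≤ e + 2) :
    DirWalk 𝓐 (e + 2 - y) (x, e + 2) (x, y) :=
  dirWalk_left hxn hm hy fun t _ _ => by dsimp only [staircaseOrientation]; omega

theorem exists_dirWalk_of_two_le (h : IsStaircase e c) (hm : e + 2 < m) (hx : 2 ≤ x)
    (hxn : x < n) (hy : y < c x) :
    ∃ j ≤ x + (e + 1 - y) + 2, DirWalk 𝓐 j (0, e + 1) (x, y) := by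
  induction x, hx using Nat.le_induction generalizing y with
  | base =>
    have hstart : DirWalk 𝓐 3 (0, e + 1) (2, e) := by
      refine .cons (w := (0, e)) (arc_left (by omega) (by omega) ?_)
        (.cons (w := (1, e)) (arc_up (by omega) (by omega) ?_)
        (.single (arc_up (by omega) (by omega) ?_))) <;> dsimp only [staircaseOrientation] <;> omega
    have := h.le 2
    obtain hye | rfl : y ≤ e ∨ y = e + 1 := by omega
    · have hrow : DirWalk 𝓐 (e - y) (2, e) (2, y) :=
        dirWalk_left hxn (by omega) hye fun t _ _ => by dsimp only [staircaseOrientation]; omega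
      exact ⟨_, by omega, hstart.trans hrow⟩
    · have hlast : 𝓐 (2, e) (2, e + 1) :=
        arc_right hxn (by omega) (by dsimp only [staircaseOrientation]; omega)
      exact ⟨_, by omega, hstart.snoc hlast⟩
  | succ x hx ih =>
    have hgap := h.ne_one (x + 1)
    have hanti := h.antitone x
    have hle := h.le x
    obtain ⟨z, hz⟩ : ∃ z, c (x + 1) = z + 1 := ⟨c (x + 1) - 1, by omega⟩
    obtain ⟨j, hj, hjz⟩ := ih (y := z) (by omega) (by omega)
    have hup : 𝓐 (x, z) (x + 1, z) :=
      arc_up hxn (by omega) (by dsimp only [staircaseOrientation]; omega)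
    have hrow : DirWalk 𝓐 (z - y) (x + 1, z) (x + 1, y) :=
      dirWalk_left hxn (by omega) (by omega) fun t _ _ => by
        dsimp only [staircaseOrientation]; omega
    exact ⟨_, by omega, (hjz.snoc hup).trans hrow⟩

theorem exists_dirWalk_of_one_le (h : IsStaircase e c) (hm : e + 2 < m) (hx : 1 ≤ x)
    (hxn : x < n) (hxy : x = 1 → y = e + 1) (hy : y < c x) :
    ∃ j ≤ x + (e + 1 - y) + 2, DirWalk 𝓐 j (0, e + 1) (x, y) := by
  obtain rfl | hx := hx.eq_or_lt
  · obtain rfl := hxy rfl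
    refine ⟨3, by omega, .cons (w := (0, e)) (arc_left (by omega) (by omega) ?_)
      (.cons (w := (1, e)) (arc_up (by omega) (by omega) ?_)
      (.single (arc_right (by omega) (by omega) ?_)))⟩ <;>
      dsimp only [staircaseOrientation] <;> omega
  · exact h.exists_dirWalk_of_two_le hm hx hxn hy

theorem eq_of_arc_exit (h : IsStaircase e c) {a b : ℕ} (harc : 𝓐 (a, b) (x, y)) (hb : b < c a)
    (hy : c x ≤ y) : (a = 0 ∧ b = e + 1) ∧ x = 0 ∧ y = e + 2 := by
  have ha := h.le a
  have hx := h.le x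
  have hzero := h.zero
  have hone := h.one
  have htwo := h.le_two
  have hup := h.antitone a
  have hdown := h.antitone x
  have hgap := h.ne_one (a + 1)
  obtain ⟨-, ⟨rfl, rfl, hdir⟩ | ⟨rfl, rfl, -⟩ | ⟨rfl, rfl, hdir⟩ | ⟨rfl, rfl, -⟩⟩ :=
    arc_mk_iff.1 harc
  · obtain rfl | rfl | rfl | _ : a = 0 ∨ a = 1 ∨ a = 2 ∨ 3 ≤ a := by omega
    all_goals dsimp only [staircaseOrientation] at hdir; omega
  · omega
  · have hone' : c (0 + 1) = e + 2 := h.one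
    have htwo' : e + 1 ≤ c (1 + 1) := h.le_two
    obtain rfl | rfl | _ : a = 0 ∨ a = 1 ∨ 2 ≤ a := by omega
    all_goals dsimp only [staircaseOrientation] at hdir; omega
  · omega

theorem le_of_arc_entry (h : IsStaircase e c) {a b : ℕ} (harc : 𝓐 (a, b) (x, y)) (hb : c a ≤ b)
    (hy : y < c x) : 1 ≤ x ∧ (x = 1 → y = e + 1) := by
  have ha := h.le a
  have hx := h.le x
  have hzero := h.zero
  have hone := h.one
  have hup := h.antitone a
  have hdown := h.antitone x
  obtain ⟨-, ⟨rfl, rfl, -⟩ | ⟨rfl, rfl, hdir⟩ | ⟨rfl, rfl, -⟩ | ⟨rfl, rfl, -⟩⟩ := arc_mk_iff.1 harc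
  · omega
  · obtain rfl | rfl | _ : a = 0 ∨ a = 1 ∨ 2 ≤ a := by omega
    all_goals dsimp only [staircaseOrientation] at hdir; omega
  · omega
  · have hone' : c (0 + 1) = e + 2 := h.one
    have htwo' : e + 1 ≤ c (1 + 1) := h.le_two
    obtain rfl | rfl | _ : x = 0 ∨ x = 1 ∨ 2 ≤ x := by omega
    all_goals omega

theorem eq_of_arc_corner (harc : 𝓐 (0, e + 2) (x, y)) : x = 0 ∧ y = e + 3 := by
  obtain ⟨-, ⟨rfl, rfl, -⟩ | ⟨rfl, hy, harc⟩ | ⟨rfl, rfl, harc⟩ | ⟨rfl, hx, -⟩⟩ := arc_mk_iff.1 harc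
  all_goals dsimp only [staircaseOrientation] at *
  all_goals omega

/- A walk out of the staircase starts with `(0, e + 1) → (0, e + 2) → (0, e + 3)` and hence wastes
two steps; this pays for the detour inside. -/
theorem walkConvex_staircase (h : IsStaircase e c) (hm : e + 2 < m) :
    WalkConvex 𝓐 (staircase n m c) := by
  refine walkConvex_of_detours
    (fun q v => manhattan v q + if v = (0, e + 2) then 2 else 0) ?_ ?_
  · rintro ⟨a, b⟩ hq ⟨x, y⟩ ⟨x', y'⟩ - harc
    by_cases hxy : (x, y) = (0, e + 2)
    · simp only [Prod.mk.injEq] at hxy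
      obtain ⟨rfl, rfl⟩ := hxy
      obtain ⟨rfl, rfl⟩ := eq_of_arc_corner harc
      have := ((h.mem_staircase hm.le).1 hq).2.trans_le (h.le a)
      simp only [manhattan, Nat.dist, Prod.mk.injEq]
      split_ifs <;> omega
    · have hadj := harc.manhattan_eq_one
      have := manhattan_triangle (x, y) (x', y') (a, b)
      simp only [hxy, if_false]
      omega
  · rintro ⟨a, b⟩ hp ⟨x, y⟩ hx hexit ⟨x', y'⟩ hz ⟨a', b'⟩ hq hentry
    have hbox := hexit.1.2.1
    have hbox' := hentry.1.1.1
    simp only [h.mem_staircase hm.le] at hp hx hz hq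
    obtain ⟨⟨rfl, rfl⟩, rfl, rfl⟩ := h.eq_of_arc_exit hexit hp.2 (by grind)
    obtain ⟨ha', hone⟩ := h.le_of_arc_entry hentry (by grind) hq.2
    obtain ⟨l, hl, hwalk⟩ := h.exists_dirWalk_of_one_le hm ha' hq.1 hone hq.2
    refine ⟨l, hwalk, ?_⟩
    simp only [manhattan, Nat.dist, Prod.mk.injEq]
    split_ifs <;> omega

theorem arc_corner (h : IsStaircase e c) (hn : 3 ≤ n) (hm : e + 2 < m) :
    𝓐 (2, e + 2) (2, e + 1) ∧ 𝓐 (2, e + 1) (1, e + 1) ∧ 𝓐 (1, e + 1) (0, e + 1) ∧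
      𝓐 (0, e + 1) (0, e + 2) := by
  have := h.le_two
  refine ⟨arc_left (by omega) (by omega) ?_, arc_down (by omega) (by omega) ?_,
    arc_down (by omega) (by omega) ?_, arc_right (by omega) (by omega) ?_⟩ <;>
    dsimp only [staircaseOrientation] <;> omega

theorem four_le_of_dirWalk {k : ℕ} (hk : DirWalk 𝓐 k (2, e + 2) (0, e + 2)) : 4 ≤ k := by
  have hpos := hk.manhattan_le
  simp only [manhattan, Nat.dist] at hpos
  obtain ⟨k, rfl⟩ : ∃ l, k = l + 1 := ⟨k - 1, by omega⟩
  obtain ⟨⟨a, b⟩, harc, hk⟩ := hk.exists_cons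
  have hle := hk.manhattan_le
  simp only [manhattan, Nat.dist] at hle
  obtain ⟨-, ⟨rfl, rfl, -⟩ | ⟨rfl, hb, -⟩ | ⟨rfl, rfl, -⟩ | ⟨rfl, ha, hdir⟩⟩ := arc_mk_iff.1 harc
  iterate 3 omega
  dsimp only [staircaseOrientation] at hdir
  omega

theorem corner_mem (h : IsStaircase e c) (hn : 3 ≤ n) (hm : e + 2 < m) (hS : WalkConvex 𝓐 S)
    (h₂ : (2, e + 2) ∈ S) (h₀ : (0, e + 2) ∈ S) :
    (2, e + 1) ∈ S ∧ (1, e + 1) ∈ S ∧ (0, e + 1) ∈ S := by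
  obtain ⟨a₁, a₂, a₃, a₄⟩ := h.arc_corner hn hm
  have hmin : ∀ k, DirWalk 𝓐 k (2, e + 2) (0, e + 2) → 4 ≤ k := fun k => four_le_of_dirWalk
  exact ⟨hS h₂ h₀ (.single a₁) (.cons a₂ (.cons a₃ (.single a₄))) hmin,
    hS h₂ h₀ (.cons a₁ (.single a₂)) (.cons a₃ (.single a₄)) hmin,
    hS h₂ h₀ (.cons a₁ (.cons a₂ (.single a₃))) (.single a₄) hmin⟩

theorem base_subset (h : IsStaircase e c) (hn : 3 ≤ n) (hm : e + 2 < m) (hS : WalkConvex 𝓐 S)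
    (h₁ : (1, e + 1) ∈ S) (h₀ : (0, e + 1) ∈ S) : Set.Icc (0, 0) (1, e + 1) ⊆ S := by
  refine hS.rectangle_subset (x := 0) (y := e) (fun a b _ ha _ hb => ?_) (by omega) (by omega)
    (h.arc_corner hn hm).2.2.1 h₁ h₀ ?_ ?_ le_rfl one_pos (Nat.zero_le _) (Nat.lt_succ_self e)
  · obtain rfl : a = 0 := by omega
    exact cyclicSquare_base b (by omega)
  all_goals simp only [Set.mem_Icc, Prod.mk_le_mk]; omega

theorem row_two_mem_of_left (hn : 3 ≤ n) (hm : e + 2 < m) (hS : WalkConvex 𝓐 S)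
    (hone : ∀ y ≤ e + 1, (1, y) ∈ S) {z : ℕ} (hz : z ≤ e + 1) (hzS : (2, z) ∈ S)
    (hleft : ∀ t < z, ¬ (staircaseOrientation e c).right 2 t) (hy : y < e) (hyz : y ≤ z) :
    (2, y) ∈ S := by
  have hdown : 𝓐 (2, y) (1, y) :=
    arc_down (by omega) (by omega) (by dsimp only [staircaseOrientation]; omega)
  refine hS.mem_of_add_le_manhattan hzS (hone y (by omega))
    (dirWalk_left hn (by omega) hyz fun t _ ht => hleft t ht) (.single hdown) ?_
  simp only [manhattan, Nat.dist]
  omega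

theorem row_two_mem (h : IsStaircase e c) (hn : 3 ≤ n) (hm : e + 2 < m) (hS : WalkConvex 𝓐 S)
    (hone : ∀ y ≤ e + 1, (1, y) ∈ S) (htwo : (2, e + 1) ∈ S) (hy : y ≤ e + 1) : (2, y) ∈ S := by
  by_cases hc : c 2 = e + 2
  · have he : (2, e) ∈ S := by
      refine hS.mem_of_add_le_manhattan (hone e (by omega)) htwo
        (.single (arc_up hn (by omega) ?_)) (.single (arc_right hn (by omega) ?_)) ?_
      iterate 2 dsimp only [staircaseOrientation]; omega
      simp only [manhattan, Nat.dist]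
      omega
    obtain rfl | rfl | hye : y = e + 1 ∨ y = e ∨ y < e := by omega
    · exact htwo
    · exact he
    · exact row_two_mem_of_left hn hm hS hone (by omega) he
        (fun t _ => by dsimp only [staircaseOrientation]; omega) hye hye.le
  · have hleft : ∀ t < e + 1, ¬ (staircaseOrientation e c).right 2 t := fun t _ => by
      dsimp only [staircaseOrientation]; omega
    have hlt : ∀ t < e, (2, t) ∈ S := fun t ht =>
      row_two_mem_of_left hn hm hS hone le_rfl htwo hleft ht (by omega)
    obtain rfl | rfl | hye : y = e + 1 ∨ y = e ∨ y < e := by omega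
    · exact htwo
    · obtain ⟨z, rfl⟩ : ∃ z, y = z + 1 := ⟨y - 1, by
        have := h.le_two
        have := h.ne_one 2
        have := h.le 2
        omega⟩
      refine hS.mem_of_add_le_manhattan htwo (hlt z (by omega))
        (.single (arc_left hn (by omega) (hleft _ (by omega))))
        (.single (arc_left hn (by omega) (hleft _ (by omega)))) ?_
      simp only [manhattan, Nat.dist]
      omega
    · exact hlt y hye

theorem rows_mem (hm : e + 2 < m) (hS : WalkConvex 𝓐 S)
    (hwall : ∀ x, x < n → (x, e + 2) ∈ S) (hrow : ∀ y ≤ e + 1, (2, y) ∈ S) (hx : 2 ≤ x)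
    (hxn : x < n) (hy : y ≤ e + 1) : (x, y) ∈ S := by
  induction x, hx using Nat.le_induction generalizing y with
  | base => exact hrow y hy
  | succ x hx ih =>
    have hdown : ∀ t ≤ e + 1, ¬ (staircaseOrientation e c).up x t → (x + 1, t) ∈ S := by
      intro t ht hup
      refine hS.mem_of_add_le_manhattan (hwall _ hxn) (ih (by omega) ht)
        (dirWalk_left_of_three_le (by omega) hxn hm (by omega))
        (.single (arc_down hxn (by omega) hup)) ?_
      simp only [manhattan, Nat.dist]
      omega
    by_cases hup : (staircaseOrientation e c).up x y
    · obtain ⟨z, rfl⟩ : ∃ z, y = z + 1 :=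
        ⟨y - 1, by dsimp only [staircaseOrientation] at hup; omega⟩
      have hz : (x + 1, z) ∈ S :=
        hdown z (by omega) (by dsimp only [staircaseOrientation] at hup ⊢; omega)
      refine hS.mem_of_add_le_manhattan (hwall _ hxn) hz
        (dirWalk_left_of_three_le (by omega) hxn hm (by omega))
        (.single (arc_left hxn (by omega) (by dsimp only [staircaseOrientation]; omega))) ?_
      simp only [manhattan, Nat.dist]
      omega
    · exact hdown y hy hup

theorem gridBox_subset (h : IsStaircase e c) (hn : 3 ≤ n) (hm : e + 2 < m) (hS : WalkConvex 𝓐 S)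
    (hwall : ∀ x y, x < n → e + 2 ≤ y → y < m → (x, y) ∈ S) : gridBox n m ⊆ S := by
  obtain ⟨h₂, h₁, h₀⟩ := h.corner_mem hn hm hS (hwall 2 _ hn le_rfl hm)
    (hwall 0 _ (by omega) le_rfl hm)
  have hbase : ∀ x y, x ≤ 1 → y ≤ e + 1 → (x, y) ∈ S := fun x y hx hy =>
    h.base_subset hn hm hS h₁ h₀ ⟨⟨Nat.zero_le _, Nat.zero_le _⟩, ⟨hx, hy⟩⟩
  rintro ⟨x, y⟩ ⟨hx, hy⟩
  obtain hy' | hy' := le_or_gt (e + 2) y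
  · exact hwall x y hx hy' hy
  obtain hx' | hx' := le_or_gt x 1
  · exact hbase x y hx' (by omega)
  · exact rows_mem hm hS (fun x hx => hwall x _ hx le_rfl hm)
      (fun y => h.row_two_mem hn hm hS (hbase 1 · le_rfl) h₂) hx' hx (by omega)

theorem strong (h : IsStaircase e c) (hn : 3 ≤ n) (hm : e + 4 ≤ m) :
    gridBox n m ⊆ strongComponent 𝓐 (0, e + 2) :=
  h.gridBox_subset hn (by omega) (walkConvex_strongComponent _ _) fun _ _ =>
    wall_subset_strongComponent cyclicSquare_wall (by omega) (by omega)

theorem le_of_arc_of_le (h : IsStaircase e c) {a b : ℕ} (harc : 𝓐 (a, b) (x, y)) (hy : c x ≤ y)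
    (hne : ¬ (x = 0 ∧ y = e + 2)) :
    (e + 2 ≤ y → e + 2 ≤ b) ∧ (y < e + 2 → c a ≤ b ∧ x + y < a + b) := by
  by_cases hb : b < c a
  · exact absurd (h.eq_of_arc_exit harc hb hy).2 hne
  have hzero := h.zero
  have hone := h.one
  have htwo := h.le_two
  have hup := h.le a
  obtain ⟨-, ⟨rfl, rfl, hdir⟩ | ⟨rfl, rfl, -⟩ | ⟨rfl, rfl, hdir⟩ | ⟨rfl, rfl, -⟩⟩ :=
    arc_mk_iff.1 harc
  · obtain rfl | rfl | rfl | _ : a = 0 ∨ a = 1 ∨ a = 2 ∨ 3 ≤ a := by omega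
    all_goals dsimp only [staircaseOrientation] at hdir; omega
  · omega
  · have hone' : c (0 + 1) = e + 2 := h.one
    have : e + 1 ≤ c (1 + 1) := h.le_two
    obtain rfl | rfl | _ : a = 0 ∨ a = 1 ∨ 2 ≤ a := by omega
    all_goals dsimp only [staircaseOrientation] at hdir; omega
  · omega

theorem exists_mem_wall (h : IsStaircase e c) (hS : SourceSinkFree 𝓐 S) (hxy : (x, y) ∈ S)
    (hy : c x ≤ y) : ∃ p ∈ S, e + 2 ≤ p.2 := by
  obtain hwall | hlow := le_or_gt (e + 2) y
  · exact ⟨_, hxy, hwall⟩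
  refine exists_mem_of_descent (A := fun u v => 𝓐 v u) (T := {u | c u.1 ≤ u.2 ∧ u.2 < e + 2})
    (G := {u | e + 2 ≤ u.2}) (fun u => n + m - (u.1 + u.2)) (fun u hu => (hS u hu).2) ?_ hxy
    ⟨hy, hlow⟩
  rintro ⟨a, b⟩ ⟨hb, hlow⟩ ⟨a', b'⟩ harc
  obtain ⟨⟨_, _⟩, _, _⟩ := harc.1
  dsimp only at *
  have := h.le_of_arc_of_le harc hb (by omega)
  obtain hb' | hb' := le_or_gt (e + 2) b'
  · exact .inl hb'
  · exact .inr ⟨⟨by dsimp only; omega, hb'⟩, by omega⟩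

theorem exists_wall_arc (h : IsStaircase e c) (hS : SourceSinkFree 𝓐 S) (hxy : (x, y) ∈ S)
    (hy : c x ≤ y) : ∃ p ∈ S, ∃ q ∈ S, 𝓐 p q ∧ e + 2 ≤ p.2 ∧ e + 2 ≤ q.2 := by
  obtain ⟨⟨a, b⟩, hab, hb⟩ := h.exists_mem_wall hS hxy hy
  by_cases hcorner : a = 0 ∧ b = e + 2
  · obtain ⟨rfl, rfl⟩ := hcorner
    obtain ⟨⟨⟨a', b'⟩, hmem, harc⟩, -⟩ := hS _ hab
    obtain ⟨rfl, rfl⟩ := eq_of_arc_corner harc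
    exact ⟨_, hab, _, hmem, harc, hb, by dsimp only; omega⟩
  · obtain ⟨-, ⟨a', b'⟩, hmem, harc⟩ := hS _ hab
    have := h.le_of_arc_of_le harc ((h.le a).trans hb) hcorner
    dsimp only at hb
    exact ⟨_, hmem, _, hab, harc, by dsimp only; omega, hb⟩

theorem sum_mem_strongConvexitySpectrum (h : IsStaircase e c) (hn : 3 ≤ n) (hm : e + 4 ≤ m) :
    ∑ x ∈ Finset.range n, c x ∈ strongConvexitySpectrum (gridGraph n m) := by
  have hmem {x y : ℕ} := h.mem_staircase (n := n) (m := m) (x := x) (y := y) (by omega)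
  rw [← h.card_staircase (n := n) (m := m) (by omega)]
  refine (staircaseOrientation e c).card_mem_strongConvexitySpectrum
    ⟨(0, 0), hmem.2 ⟨by omega, by have := h.zero; omega⟩⟩ ?_ ?_ (h.strong hn hm)
    (h.walkConvex_staircase (by omega)) ?_
  · rintro ⟨x, y⟩ hxy
    have := (hmem.1 hxy).2.trans_le (h.le x)
    exact ⟨(hmem.1 hxy).1, by dsimp only; omega⟩
  · intro hsub
    have : (0, e + 2) ∈ gridBox n m := ⟨by dsimp only; omega, by dsimp only; omega⟩
    have := (hmem.1 (hsub this)).2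
    have := h.zero
    omega
  · intro S hbox hS hfree hSC
    obtain ⟨⟨x, y⟩, hxy, hxyC⟩ := Set.not_subset.1 hSC
    have hx := (hbox hxy).1
    obtain ⟨p, hp, q, hq, hpq, hwp, hwq⟩ := h.exists_wall_arc hfree hxy (by grind)
    exact .inl (h.gridBox_subset hn (by omega) hS fun a b =>
      hS.wall_subset cyclicSquare_wall (by omega) (by omega) hpq hp hq hwp hwq)

end IsStaircase
end Staircase

/-! ### Seven vertices -/

section SevenSet

open GridOrientation

/-- A seven-vertex region: the two unit squares with corners `(0, 0)` and `(1, 1)`. -/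
def sevenSet : Finset (ℕ × ℕ) :=
  {(0, 0), (0, 1), (1, 0), (1, 1), (1, 2), (2, 1), (2, 2)}

theorem mem_sevenSet {x y : ℕ} : (x, y) ∈ (sevenSet : Set (ℕ × ℕ)) ↔
    x = 0 ∧ y ≤ 1 ∨ x = 1 ∧ y ≤ 2 ∨ x = 2 ∧ (y = 1 ∨ y = 2) := by
  simp only [sevenSet, Finset.coe_insert, Finset.coe_singleton, Set.mem_insert_iff,
    Set.mem_singleton_iff, Prod.mk.injEq]
  omega

namespace SevenSet

variable {n m x y : ℕ} {S : Set (ℕ × ℕ)}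

/-- The orientation in which `sevenSet` is a maximum convex set. Every unit square in the columns
`3, 4, …` is cyclic, and so are the two unit squares that make up `sevenSet`. -/
def sevenOrientation : GridOrientation where
  right x y := 3 ≤ y ∧ (x + y) % 2 = 0 ∨ x = 0 ∧ (y = 1 ∨ y = 2) ∨ x = 1 ∧ (y = 0 ∨ y = 2) ∨
    x = 2 ∧ (y = 0 ∨ y = 1)
  up x y := 3 ≤ y ∧ (x + y) % 2 = 1 ∨ x = 0 ∧ y = 0 ∨ x = 1 ∧ y = 1

local notation "𝓐" => Arc sevenOrientation n m

theorem cyclicSquare_wall (x y : ℕ) (hy : 3 ≤ y) : sevenOrientation.CyclicSquare x y := by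
  obtain hpar | hpar := Nat.mod_two_eq_zero_or_one (x + y)
  · refine .inl ⟨?_, ?_, ?_, ?_⟩ <;> dsimp only [sevenOrientation] <;> omega
  · refine .inr ⟨?_, ?_, ?_, ?_⟩ <;> dsimp only [sevenOrientation] <;> omega

theorem cyclicSquare_zero : sevenOrientation.CyclicSquare 0 0 := by
  refine .inr ⟨?_, ?_, ?_, ?_⟩ <;> dsimp only [sevenOrientation] <;> omega

theorem cyclicSquare_one : sevenOrientation.CyclicSquare 1 1 := by
  refine .inr ⟨?_, ?_, ?_, ?_⟩ <;> dsimp only [sevenOrientation] <;> omega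

theorem arc_square_zero (hn : 4 ≤ n) (hm : 5 ≤ m) :
    𝓐 (0, 1) (0, 0) ∧ 𝓐 (0, 0) (1, 0) ∧ 𝓐 (1, 0) (1, 1) ∧ 𝓐 (1, 1) (0, 1) := by
  refine ⟨arc_left (by omega) (by omega) ?_, arc_up (by omega) (by omega) ?_,
    arc_right (by omega) (by omega) ?_, arc_down (by omega) (by omega) ?_⟩ <;>
    dsimp only [sevenOrientation] <;> omega

theorem arc_square_one (hn : 4 ≤ n) (hm : 5 ≤ m) :
    𝓐 (1, 1) (2, 1) ∧ 𝓐 (2, 1) (2, 2) ∧ 𝓐 (2, 2) (1, 2) ∧ 𝓐 (1, 2) (1, 1) := by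
  refine ⟨arc_up (by omega) (by omega) ?_, arc_right (by omega) (by omega) ?_,
    arc_down (by omega) (by omega) ?_, arc_left (by omega) (by omega) ?_⟩ <;>
    dsimp only [sevenOrientation] <;> omega

theorem eq_of_arc_exit {a b : ℕ} (harc : 𝓐 (a, b) (x, y))
    (hab : (a, b) ∈ (sevenSet : Set (ℕ × ℕ))) (hxy : (x, y) ∉ (sevenSet : Set (ℕ × ℕ))) :
    (a = 0 ∧ b = 1) ∧ x = 0 ∧ y = 2 ∨ (a = 1 ∧ b = 2) ∧ (x = 0 ∧ y = 2 ∨ x = 1 ∧ y = 3) := by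
  rw [mem_sevenSet] at hab hxy
  obtain ⟨-, ⟨rfl, rfl, hdir⟩ | ⟨rfl, rfl, hdir⟩ | ⟨rfl, rfl, hdir⟩ | ⟨rfl, rfl, hdir⟩⟩ :=
    arc_mk_iff.1 harc
  all_goals obtain hab | hab | hab := hab
  all_goals dsimp only [sevenOrientation] at hdir; omega

theorem eq_of_arc_entry {a b : ℕ} (harc : 𝓐 (a, b) (x, y))
    (hab : (a, b) ∉ (sevenSet : Set (ℕ × ℕ))) (hxy : (x, y) ∈ (sevenSet : Set (ℕ × ℕ))) :
    x = 2 ∧ y = 2 ∨ x = 2 ∧ y = 1 ∨ x = 1 ∧ y = 0 := by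
  rw [mem_sevenSet] at hab hxy
  obtain ⟨-, ⟨rfl, rfl, hdir⟩ | ⟨rfl, rfl, hdir⟩ | ⟨rfl, rfl, hdir⟩ | ⟨rfl, rfl, hdir⟩⟩ :=
    arc_mk_iff.1 harc
  all_goals obtain hxy | hxy | hxy := hxy
  all_goals dsimp only [sevenOrientation] at hdir; omega

theorem eq_of_arc_corner (harc : 𝓐 (0, 2) (x, y)) : x = 0 ∧ y = 3 := by
  obtain ⟨-, ⟨rfl, rfl, -⟩ | ⟨rfl, hy, hdir⟩ | ⟨rfl, rfl, hdir⟩ | ⟨rfl, hx, -⟩⟩ := arc_mk_iff.1 harc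
  all_goals dsimp only [sevenOrientation] at *
  all_goals omega

theorem eq_of_arc_wall {a : ℕ} (ha : a ≤ 1) (harc : 𝓐 (a, 3) (x, y)) :
    x = 1 ∧ (y = 3 ∨ y = 4 ∧ a = 1) := by
  obtain ⟨-, ⟨rfl, rfl, hdir⟩ | ⟨rfl, hy, hdir⟩ | ⟨rfl, rfl, hdir⟩ | ⟨rfl, hx, hdir⟩⟩ :=
    arc_mk_iff.1 harc
  all_goals dsimp only [sevenOrientation] at *
  all_goals omega

theorem exists_dirWalk_of_exit (hn : 4 ≤ n) (hm : 5 ≤ m)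
    (hxy : x = 2 ∧ y = 2 ∨ x = 2 ∧ y = 1 ∨ x = 1 ∧ y = 0) :
    (∃ l ≤ manhattan (0, 2) (x, y) + 4, DirWalk 𝓐 l (0, 1) (x, y)) ∧
      ∃ l ≤ manhattan (1, 3) (x, y) + 2, l ≤ manhattan (0, 2) (x, y) + 4 ∧
        DirWalk 𝓐 l (1, 2) (x, y) := by
  obtain ⟨a₁, a₂, a₃, a₄⟩ := arc_square_zero (n := n) (m := m) hn hm
  obtain ⟨b₁, b₂, -, b₄⟩ := arc_square_one (n := n) (m := m) hn hm
  simp only [manhattan, Nat.dist]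
  obtain ⟨rfl, rfl⟩ | ⟨rfl, rfl⟩ | ⟨rfl, rfl⟩ := hxy
  · exact ⟨⟨5, by omega, .cons a₁ (.cons a₂ (.cons a₃ (.cons b₁ (.single b₂))))⟩,
      ⟨3, by omega, by omega, .cons b₄ (.cons b₁ (.single b₂))⟩⟩
  · exact ⟨⟨4, by omega, .cons a₁ (.cons a₂ (.cons a₃ (.single b₁)))⟩,
      ⟨2, by omega, by omega, .cons b₄ (.single b₁)⟩⟩
  · exact ⟨⟨2, by omega, .cons a₁ (.single a₂)⟩,
      ⟨4, by omega, by omega, .cons b₄ (.cons a₄ (.cons a₁ (.single a₂)))⟩⟩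

/- From `(0, 3)` and `(1, 3)` every walk continues with an arc that points away from `sevenSet`, and
`(0, 2)` leads only to `(0, 3)`; the penalties account for these wasted steps. -/
theorem walkConvex_sevenSet (hn : 4 ≤ n) (hm : 5 ≤ m) : WalkConvex 𝓐 sevenSet := by
  refine walkConvex_of_detours (fun q v => manhattan v q + (if v.1 = 0 ∧ v.2 = 2 then 4 else 0) +
    if v.1 ≤ 1 ∧ v.2 = 3 then 2 else 0) ?_ ?_
  · rintro ⟨a, b⟩ hq ⟨x, y⟩ ⟨x', y'⟩ - harc
    rw [mem_sevenSet] at hq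
    have hadj := harc.manhattan_eq_one
    have htri := manhattan_triangle (x, y) (x', y') (a, b)
    by_cases hxy : x = 0 ∧ y = 2
    · obtain ⟨rfl, rfl⟩ := hxy
      obtain ⟨rfl, rfl⟩ := eq_of_arc_corner harc
      dsimp only [manhattan, Nat.dist]
      split_ifs <;> omega
    by_cases hwall : x ≤ 1 ∧ y = 3
    · obtain ⟨hx, rfl⟩ := hwall
      have := eq_of_arc_wall hx harc
      dsimp only [manhattan, Nat.dist]
      split_ifs <;> omega
    · dsimp only
      split_ifs <;> omega
  · rintro ⟨a, b⟩ hp ⟨x, y⟩ hx hexit ⟨x', y'⟩ hz ⟨a', b'⟩ hq hentry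
    have hend := eq_of_arc_entry hentry hz hq
    obtain ⟨⟨l, hl, hwalk⟩, ⟨l', hl', hl'', hwalk'⟩⟩ :=
      exists_dirWalk_of_exit (n := n) (m := m) hn hm hend
    have hself : manhattan (a', b') (a', b') = 0 := by simp only [manhattan, Nat.dist]; omega
    obtain ⟨⟨rfl, rfl⟩, rfl, rfl⟩ | ⟨⟨rfl, rfl⟩, ⟨rfl, rfl⟩ | ⟨rfl, rfl⟩⟩ :=
      eq_of_arc_exit hexit hp hx
    on_goal 1 => refine ⟨l, hwalk, ?_⟩
    on_goal 2 => refine ⟨l', hwalk', ?_⟩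
    on_goal 3 => refine ⟨l', hwalk', ?_⟩
    all_goals
      dsimp only
      split_ifs <;> omega

theorem four_le_of_dirWalk {k : ℕ} (hk : DirWalk 𝓐 k (2, 3) (0, 3)) : 4 ≤ k := by
  have hφ : ∀ u v, 𝓐 u v →
      (manhattan u (0, 3) + if (u.1 = 1 ∨ u.1 = 2) ∧ u.2 = 3 then 2 else 0) ≤
        (manhattan v (0, 3) + if (v.1 = 1 ∨ v.1 = 2) ∧ v.2 = 3 then 2 else 0) + 1 := by
    rintro ⟨x, y⟩ ⟨x', y'⟩ harc
    have hadj := harc.manhattan_eq_one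
    have htri := manhattan_triangle (x, y) (x', y') (0, 3)
    by_cases hone : x = 1 ∧ y = 3
    · obtain ⟨rfl, rfl⟩ := hone
      have := eq_of_arc_wall le_rfl harc
      dsimp only [manhattan, Nat.dist]
      split_ifs <;> omega
    by_cases htwo : x = 2 ∧ y = 3
    · obtain ⟨rfl, rfl⟩ := htwo
      obtain ⟨-, hdir⟩ := arc_mk_iff.1 harc
      dsimp only [sevenOrientation] at hdir
      dsimp only [manhattan, Nat.dist]
      split_ifs <;> omega
    · dsimp only
      split_ifs <;> omega
  simpa [manhattan, Nat.dist] using hk.potential_le hφ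

theorem corner_mem (hn : 4 ≤ n) (hm : 5 ≤ m) (hS : WalkConvex 𝓐 S) (h₂ : (2, 3) ∈ S)
    (h₀ : (0, 3) ∈ S) : (2, 2) ∈ S ∧ (1, 2) ∈ S ∧ (0, 2) ∈ S := by
  obtain ⟨-, -, a₂, -⟩ := arc_square_one (n := n) (m := m) hn hm
  have a₁ : 𝓐 (2, 3) (2, 2) :=
    arc_left (by omega) (by omega) (by dsimp only [sevenOrientation]; omega)
  have a₃ : 𝓐 (1, 2) (0, 2) :=
    arc_down (by omega) (by omega) (by dsimp only [sevenOrientation]; omega)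
  have a₄ : 𝓐 (0, 2) (0, 3) :=
    arc_right (by omega) (by omega) (by dsimp only [sevenOrientation]; omega)
  have hmin : ∀ k, DirWalk 𝓐 k (2, 3) (0, 3) → 4 ≤ k := fun k => four_le_of_dirWalk
  exact ⟨hS h₂ h₀ (.single a₁) (.cons a₂ (.cons a₃ (.single a₄))) hmin,
    hS h₂ h₀ (.cons a₁ (.single a₂)) (.cons a₃ (.single a₄)) hmin,
    hS h₂ h₀ (.cons a₁ (.cons a₂ (.single a₃))) (.single a₄) hmin⟩

theorem sevenSet_subset (hn : 4 ≤ n) (hm : 5 ≤ m) (hS : WalkConvex 𝓐 S) (h₂ : (2, 2) ∈ S)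
    (h₁ : (1, 2) ∈ S) (h₀ : (0, 2) ∈ S) : (sevenSet : Set (ℕ × ℕ)) ⊆ S := by
  obtain ⟨-, -, -, a₄⟩ := arc_square_zero (n := n) (m := m) hn hm
  obtain ⟨-, -, b₃, -⟩ := arc_square_one (n := n) (m := m) hn hm
  have hexit : 𝓐 (0, 1) (0, 2) :=
    arc_right (by omega) (by omega) (by dsimp only [sevenOrientation]; omega)
  have hone := hS.square_subset cyclicSquare_one (by omega) (by omega) b₃ h₂ h₁
    (by decide) (by decide)
  have h₁₁ : (1, 1) ∈ S := hone (by decide)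
  have h₀₁ : (0, 1) ∈ S := hS.mem_of_add_le_manhattan h₁₁ h₀ (.single a₄) (.single hexit)
    (by simp [manhattan, Nat.dist])
  have hzero := hS.square_subset cyclicSquare_zero (by omega) (by omega) a₄ h₁₁ h₀₁
    (by decide) (by decide)
  rintro ⟨x, y⟩ hxy
  rw [mem_sevenSet] at hxy
  by_cases hle : x ≤ 1 ∧ y ≤ 1
  · exact hzero ⟨⟨Nat.zero_le _, Nat.zero_le _⟩, hle⟩
  · exact hone ⟨⟨by dsimp only; omega, by dsimp only; omega⟩,
      ⟨by dsimp only; omega, by dsimp only; omega⟩⟩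

theorem mem_of_left_of_down (hm : 5 ≤ m) (hS : WalkConvex 𝓐 S) (hx : 3 ≤ x) (hxn : x < n)
    (hwall : (x, 3) ∈ S) {a a' : ℕ} (ha : (a, y) ∈ S) (hay : 1 ≤ a ∧ y = 0 ∨ 2 ≤ a) (hy : y ≤ 2)
    (haa : a ≤ a') (hax : a' ≤ x) : (a', y) ∈ S := by
  have hleft : DirWalk 𝓐 (3 - y) (x, 3) (x, y) :=
    dirWalk_left hxn (by omega) (by omega) fun t _ _ => by dsimp only [sevenOrientation]; omega
  have hdown : DirWalk 𝓐 (x - a') (x, y) (a', y) :=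
    dirWalk_down (by omega) hxn hax fun t _ _ => by dsimp only [sevenOrientation]; omega
  have hlast : DirWalk 𝓐 (a' - a) (a', y) (a, y) :=
    dirWalk_down (by omega) (by omega) haa fun t _ _ => by dsimp only [sevenOrientation]; omega
  refine hS.mem_of_add_le_manhattan hwall ha (hleft.trans hdown) hlast ?_
  simp only [manhattan, Nat.dist]
  omega

theorem gridBox_subset (hn : 4 ≤ n) (hm : 5 ≤ m) (hS : WalkConvex 𝓐 S)
    (hwall : ∀ x y, x < n → 3 ≤ y → y < m → (x, y) ∈ S) : gridBox n m ⊆ S := by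
  obtain ⟨h₂, h₁, h₀⟩ := corner_mem hn hm hS (hwall 2 3 (by omega) le_rfl (by omega))
    (hwall 0 3 (by omega) le_rfl (by omega))
  have hseven : ∀ a b, _ → (a, b) ∈ S := fun a b h =>
    sevenSet_subset hn hm hS h₂ h₁ h₀ (mem_sevenSet.2 h)
  rintro ⟨x, y⟩ ⟨hx, hy⟩
  dsimp only at hx hy
  obtain hy' | hy' := le_or_gt 3 y
  · exact hwall x y hx hy' hy
  have hrow : ∀ a, 1 ≤ a ∧ y = 0 ∨ 2 ≤ a → (a, y) ∈ S → a ≤ x → (x, y) ∈ S := fun a hay ha hax =>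
    mem_of_left_of_down (x := max x 3) hm hS (by omega) (by omega)
      (hwall _ 3 (by omega) le_rfl (by omega)) ha hay (by omega) hax (by omega)
  by_cases hC : (x, y) ∈ (sevenSet : Set (ℕ × ℕ))
  · exact sevenSet_subset hn hm hS h₂ h₁ h₀ hC
  rw [mem_sevenSet] at hC
  obtain ⟨rfl, rfl⟩ | rfl | ⟨hx2, hy2⟩ : x = 0 ∧ y = 2 ∨ y = 0 ∨ 2 ≤ x ∧ 1 ≤ y := by omega
  · exact h₀
  · exact hrow 1 (by omega) (hseven 1 0 (by omega)) (by omega)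
  · exact hrow 2 (by omega) (hseven 2 y (by omega)) hx2

theorem strong (hn : 4 ≤ n) (hm : 5 ≤ m) : gridBox n m ⊆ strongComponent 𝓐 (0, 3) :=
  gridBox_subset hn hm (walkConvex_strongComponent _ _) fun _ _ =>
    wall_subset_strongComponent cyclicSquare_wall (by omega) (by omega)

theorem exists_mem_wall (hS : SourceSinkFree 𝓐 S) (hxy : (x, y) ∈ S)
    (hC : (x, y) ∉ (sevenSet : Set (ℕ × ℕ))) : ∃ p ∈ S, 3 ≤ p.2 := by
  obtain hwall | hlow := le_or_gt 3 y
  · exact ⟨_, hxy, hwall⟩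
  rw [mem_sevenSet] at hC
  by_cases hx : x = 0
  · obtain ⟨rfl, rfl⟩ : x = 0 ∧ y = 2 := by omega
    obtain ⟨⟨⟨a, b⟩, hab, harc⟩, -⟩ := hS _ hxy
    exact ⟨_, hab, (eq_of_arc_corner harc).2.ge⟩
  refine exists_mem_of_descent (A := fun u v => 𝓐 v u)
    (T := {u | u ∉ (sevenSet : Set (ℕ × ℕ)) ∧ 0 < u.1 ∧ u.2 < 3}) (G := {u | 3 ≤ u.2})
    (fun u => n + m - (u.1 + u.2)) (fun u hu => (hS u hu).2) ?_ hxy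
    ⟨mem_sevenSet.not.2 hC, Nat.pos_of_ne_zero hx, hlow⟩
  rintro ⟨a, b⟩ ⟨hab, ha, hb⟩ ⟨a', b'⟩ harc
  simp only [Set.mem_ofPred_eq, mem_sevenSet] at hab ha hb ⊢
  obtain ⟨⟨_, _, _⟩, ⟨rfl, rfl, hdir⟩ | ⟨rfl, rfl, hdir⟩ | ⟨rfl, rfl, hdir⟩ | ⟨rfl, rfl, hdir⟩⟩ :=
    arc_mk_iff.1 harc
  all_goals dsimp only [sevenOrientation] at hdir; omega

theorem exists_wall_arc (hS : SourceSinkFree 𝓐 S) (hxy : (x, y) ∈ S)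
    (hC : (x, y) ∉ (sevenSet : Set (ℕ × ℕ))) :
    ∃ p ∈ S, ∃ q ∈ S, 𝓐 p q ∧ 3 ≤ p.2 ∧ 3 ≤ q.2 := by
  obtain ⟨⟨a, b⟩, hab, hb⟩ := exists_mem_wall hS hxy hC
  dsimp only at hb
  by_cases hcorner : a ≤ 1 ∧ b = 3
  · obtain ⟨ha, rfl⟩ := hcorner
    obtain ⟨⟨⟨a', b'⟩, hmem, harc⟩, -⟩ := hS _ hab
    have := eq_of_arc_wall ha harc
    exact ⟨_, hab, _, hmem, harc, le_rfl, by dsimp only; omega⟩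
  · obtain ⟨-, ⟨a', b'⟩, hmem, harc⟩ := hS _ hab
    refine ⟨_, hmem, _, hab, harc, ?_, hb⟩
    obtain ⟨-, ⟨rfl, rfl, hdir⟩ | ⟨rfl, rfl, hdir⟩ | ⟨rfl, rfl, hdir⟩ | ⟨rfl, rfl, hdir⟩⟩ :=
      arc_mk_iff.1 harc
    all_goals dsimp only [sevenOrientation] at hdir ⊢; omega

theorem seven_mem_strongConvexitySpectrum (hn : 4 ≤ n) (hm : 5 ≤ m) :
    7 ∈ strongConvexitySpectrum (gridGraph n m) := by
  change sevenSet.card ∈ _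
  refine sevenOrientation.card_mem_strongConvexitySpectrum ⟨(0, 0), by decide⟩ ?_ ?_
    (strong hn hm) (walkConvex_sevenSet hn hm) ?_
  · rintro ⟨x, y⟩ hxy
    rw [mem_sevenSet] at hxy
    exact ⟨by dsimp only; omega, by dsimp only; omega⟩
  · intro hsub
    have : (0, 2) ∈ gridBox n m := ⟨by dsimp only; omega, by dsimp only; omega⟩
    exact absurd (hsub this) (by decide)
  · intro S _ hS hfree hSC
    obtain ⟨⟨x, y⟩, hxy, hxyC⟩ := Set.not_subset.1 hSC
    obtain ⟨p, hp, q, hq, hpq, hwp, hwq⟩ := exists_wall_arc hfree hxy hxyC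
    exact .inl (gridBox_subset hn hm hS fun a b =>
      hS.wall_subset cyclicSquare_wall (by omega) (by omega) hpq hp hq hwp hwq)

end SevenSet
end SevenSet

section Frame

open GridOrientation

/-- In the grid on `{0, …, d + 1}²` the last row is directed towards the corner
`(d + 1, d + 1)`, the last column away from it, every other arc at the last row enters that row and
every other arc at the last column leaves that column. -/
structure GridOrientation.IsFramed (O : GridOrientation) (d : ℕ) : Prop where
  right : ∀ y ≤ d, O.right (d + 1) y
  up : ∀ y ≤ d, O.up d y
  left : ∀ x ≤ d, ¬ O.right x d
  down : ∀ x ≤ d, ¬ O.up x (d + 1)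

namespace GridOrientation.IsFramed

variable {O : GridOrientation} {d : ℕ} {S : Set (ℕ × ℕ)}

local notation "𝓐" => Arc O (d + 2) (d + 2)

theorem cyclicSquare (hO : O.IsFramed d) : O.CyclicSquare d d :=
  .inr ⟨hO.left d le_rfl, hO.down d le_rfl, hO.right d le_rfl, hO.up d le_rfl⟩

theorem eq_of_arc_last_row (hO : O.IsFramed d) {x y b : ℕ} (hb : b ≤ d)
    (harc : 𝓐 (d + 1, b) (x, y)) : x = d + 1 ∧ y = b + 1 := by
  have hright := hO.right y
  have hup := hO.up b hb
  obtain ⟨⟨-, hx, hy⟩, ⟨rfl, rfl, -⟩ | ⟨rfl, rfl, hdir⟩ | ⟨rfl, rfl, -⟩ | ⟨rfl, hx', hdir⟩⟩ :=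
    arc_mk_iff.1 harc
  · exact ⟨rfl, rfl⟩
  · exact absurd (hright (by omega)) hdir
  · omega
  · obtain rfl : x = d := by omega
    exact absurd hup hdir

theorem eq_of_arc_last_column (hO : O.IsFramed d) {x y a : ℕ} (ha : a ≤ d)
    (harc : 𝓐 (x, y) (a, d + 1)) : x = a + 1 ∧ y = d + 1 := by
  have hleft := hO.left a ha
  have hdown := hO.down x
  obtain ⟨⟨⟨hx, hy⟩, -⟩, ⟨rfl, hy', hdir⟩ | ⟨rfl, rfl, -⟩ | ⟨rfl, rfl, hdir⟩ |
    ⟨rfl, rfl, -⟩⟩ := arc_mk_iff.1 harc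
  · obtain rfl : y = d := by omega
    exact absurd hdir hleft
  · omega
  · exact absurd hdir (hdown (by omega))
  · exact ⟨rfl, rfl⟩

theorem corner_mem (hO : O.IsFramed d) (hfree : SourceSinkFree 𝓐 S)
    (hbox : S ⊆ gridBox (d + 2) (d + 2)) {p : ℕ × ℕ} (hp : p ∈ S)
    (hlast : p.1 = d + 1 ∨ p.2 = d + 1) : (d + 1, d + 1) ∈ S := by
  obtain ⟨x, y⟩ := p
  obtain ⟨hx, hy⟩ := hbox hp
  dsimp only at hx hy hlast
  by_cases hcorner : x = d + 1 ∧ y = d + 1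
  · obtain ⟨rfl, rfl⟩ := hcorner
    exact hp
  obtain rfl | rfl := hlast
  · refine mem_of_descent (A := 𝓐) (T := {u | u.1 = d + 1 ∧ u.2 ≤ d})
      (fun u => d + 1 - u.2) (fun u hu => (hfree u hu).1) ?_ hp ⟨rfl, by dsimp only; omega⟩
    rintro ⟨_, b⟩ ⟨rfl, hb⟩ ⟨x, y⟩ harc
    obtain ⟨rfl, rfl⟩ := hO.eq_of_arc_last_row hb harc
    simp only [Prod.mk.injEq, true_and, Set.mem_ofPred_eq] at hb ⊢
    omega
  · refine mem_of_descent (A := fun u v => 𝓐 v u)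
      (T := {u | u.2 = d + 1 ∧ u.1 ≤ d}) (fun u => d + 1 - u.1)
      (fun u hu => (hfree u hu).2) ?_ hp ⟨rfl, by dsimp only; omega⟩
    rintro ⟨a, _⟩ ⟨rfl, ha⟩ ⟨x, y⟩ harc
    obtain ⟨rfl, rfl⟩ := hO.eq_of_arc_last_column ha harc
    simp only [Prod.mk.injEq, and_true, true_and, Set.mem_ofPred_eq] at ha ⊢
    omega

theorem corner_subset (hO : O.IsFramed d) (hS : WalkConvex 𝓐 S) (hfree : SourceSinkFree 𝓐 S)
    (hbox : S ⊆ gridBox (d + 2) (d + 2)) {p : ℕ × ℕ} (hp : p ∈ S)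
    (hlast : p.1 = d + 1 ∨ p.2 = d + 1) : Set.Icc (d, d) (d + 1, d + 1) ⊆ S := by
  have hcorner := hO.corner_mem hfree hbox hp hlast
  obtain ⟨-, ⟨x, y⟩, hmem, harc⟩ := hfree _ hcorner
  refine hS.square_subset hO.cyclicSquare (by omega) (by omega) harc hmem hcorner ?_ ?_
  all_goals
    have := harc.manhattan_eq_one
    obtain ⟨⟨⟨_, _⟩, _⟩, -⟩ := arc_mk_iff.1 harc
    simp only [manhattan, Nat.dist] at this
    simp only [Set.mem_Icc, Prod.mk_le_mk]
    omega

end GridOrientation.IsFramed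

theorem ncard_le_four_of_subset_unitSquare {x y : ℕ} {S : Set (ℕ × ℕ)}
    (hS : S ⊆ Set.Icc (x, y) (x + 1, y + 1)) : S.ncard ≤ 4 := by
  have h := Set.ncard_le_ncard hS (Set.finite_Icc _ _)
  rw [← Finset.coe_Icc, Set.ncard_coe_finset, ← Finset.Icc_product_Icc, Finset.card_product,
    Nat.card_Icc, Nat.card_Icc, Nat.add_assoc, Nat.add_sub_cancel_left, Nat.add_assoc,
    Nat.add_sub_cancel_left] at h
  exact h

end Frame

/-! ### The square in the square grid -/

section Square

open GridOrientation

namespace SquareRegion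

variable {d x y : ℕ} {S : Set (ℕ × ℕ)}

/-- The orientation of the grid on `{0, …, d + 1}²` in which the square `{0, …, d}²` is a maximum
convex set. -/
def squareOrientation (d : ℕ) : GridOrientation where
  right x y := x = d + 1 ∨ 1 ≤ x ∧ y < d
  up x y := y = 0 ∨ x = d ∧ y ≤ d

local notation "𝓐" => Arc (squareOrientation d) (d + 2) (d + 2)

theorem isFramed : (squareOrientation d).IsFramed d := by
  constructor <;> dsimp only [squareOrientation] <;> omega

theorem dirWalk_row (hx : 1 ≤ x) (hxd : x ≤ d) {z : ℕ} (hyz : y ≤ z) (hz : z ≤ d) :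
    DirWalk 𝓐 (z - y) (x, y) (x, z) :=
  dirWalk_right (by omega) (by omega) hyz fun t _ _ => by dsimp only [squareOrientation]; omega

theorem dirWalk_column {z : ℕ} (hz : z ≤ x) (hx : x ≤ d) (hy : 1 ≤ y) (hyd : y ≤ d) :
    DirWalk 𝓐 (x - z) (x, y) (z, y) :=
  dirWalk_down (by omega) (by omega) hz fun t _ _ => by dsimp only [squareOrientation]; omega

theorem dirWalk_first_column {z : ℕ} (hxz : x ≤ z) (hz : z ≤ d + 1) :
    DirWalk 𝓐 (z - x) (x, 0) (z, 0) :=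
  dirWalk_up (by omega) (by omega) hxz fun t _ _ => .inl rfl

theorem dirWalk_last_row {z : ℕ} (hyz : y ≤ z) (hz : z ≤ d + 1) :
    DirWalk 𝓐 (z - y) (d + 1, y) (d + 1, z) :=
  dirWalk_right (by omega) (by omega) hyz fun t _ _ => .inl rfl

theorem dirWalk_last_column {z : ℕ} (hz : z ≤ x) (hx : x ≤ d + 1) :
    DirWalk 𝓐 (x - z) (x, d + 1) (z, d + 1) :=
  dirWalk_down (by omega) (by omega) hz fun t _ _ => by dsimp only [squareOrientation]; omega

theorem dirWalk_first_row {z : ℕ} (hz : z ≤ y) (hy : y ≤ d + 1) :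
    DirWalk 𝓐 (y - z) (0, y) (0, z) :=
  dirWalk_left (by omega) (by omega) hz fun t _ _ => by dsimp only [squareOrientation]; omega

theorem walkConvex_square (hd : 1 ≤ d) : WalkConvex 𝓐 (Set.Icc (0, 0) (d, d)) := by
  refine walkConvex_of_detours (fun q v => manhattan v q) ?_ ?_
  · intro q _ u v _ harc
    have hadj := harc.manhattan_eq_one
    have htri := manhattan_triangle u v q
    omega
  · rintro ⟨a, b⟩ hp ⟨x, y⟩ hx hexit ⟨x', y'⟩ hz ⟨a', b'⟩ hq hentry
    simp only [Set.mem_Icc, Prod.mk_le_mk] at hp hx hz hq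
    obtain ⟨rfl, rfl, rfl⟩ : a = d ∧ x = d + 1 ∧ y = b := by
      obtain ⟨-, ⟨rfl, rfl, hdir⟩ | ⟨rfl, rfl, hdir⟩ | ⟨rfl, rfl, hdir⟩ | ⟨rfl, rfl, hdir⟩⟩ :=
        arc_mk_iff.1 hexit
      all_goals dsimp only [squareOrientation] at hdir; omega
    obtain rfl : b' = a := by
      obtain ⟨-, ⟨rfl, rfl, hdir⟩ | ⟨rfl, rfl, hdir⟩ | ⟨rfl, rfl, hdir⟩ | ⟨rfl, rfl, hdir⟩⟩ :=
        arc_mk_iff.1 hentry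
      all_goals dsimp only [squareOrientation] at hdir; omega
    refine ⟨_, (dirWalk_row hd le_rfl hp.2.2 le_rfl).trans
      (dirWalk_column hq.2.1 le_rfl hd le_rfl), ?_⟩
    simp only [manhattan, Nat.dist]
    omega

theorem gridBox_subset (hS : WalkConvex 𝓐 S) (hzero : (0, 0) ∈ S)
    (hcorner : (d + 1, d + 1) ∈ S) : gridBox (d + 2) (d + 2) ⊆ S := by
  have first_column : ∀ x ≤ d + 1, (x, 0) ∈ S := fun x hx =>
    hS.mem_of_add_le_manhattan hzero hcorner (dirWalk_first_column (Nat.zero_le x) hx)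
      ((dirWalk_first_column hx le_rfl).trans (dirWalk_last_row (Nat.zero_le _) le_rfl))
      (by simp only [manhattan, Nat.dist]; omega)
  have last_row : ∀ y ≤ d + 1, (d + 1, y) ∈ S := fun y hy =>
    hS.mem_of_add_le_manhattan hzero hcorner ((dirWalk_first_column (Nat.zero_le _) le_rfl).trans
      (dirWalk_last_row (Nat.zero_le y) hy)) (dirWalk_last_row hy le_rfl)
      (by simp only [manhattan, Nat.dist]; omega)
  have last_column : ∀ x ≤ d + 1, (x, d + 1) ∈ S := fun x hx =>
    hS.mem_of_add_le_manhattan hcorner hzero (dirWalk_last_column hx le_rfl)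
      ((dirWalk_last_column (Nat.zero_le x) hx).trans (dirWalk_first_row (Nat.zero_le _) le_rfl))
      (by simp only [manhattan, Nat.dist]; omega)
  have first_row : ∀ y ≤ d + 1, (0, y) ∈ S := fun y hy =>
    hS.mem_of_add_le_manhattan hcorner hzero ((dirWalk_last_column (Nat.zero_le _) le_rfl).trans
      (dirWalk_first_row hy le_rfl)) (dirWalk_first_row (Nat.zero_le y) hy)
      (by simp only [manhattan, Nat.dist]; omega)
  rintro ⟨x, y⟩ ⟨hx, hy⟩
  dsimp only at hx hy
  obtain rfl | hx0 := Nat.eq_zero_or_pos x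
  · exact first_row y (by omega)
  obtain rfl | hy0 := Nat.eq_zero_or_pos y
  · exact first_column x (by omega)
  obtain rfl | hxd : x = d + 1 ∨ x ≤ d := by omega
  · exact last_row y (by omega)
  obtain rfl | hyd : y = d + 1 ∨ y ≤ d := by omega
  · exact last_column x (by omega)
  · refine hS.mem_of_add_le_manhattan (first_column x (by omega)) (first_row y (by omega))
      (dirWalk_row hx0 hxd hy0.le hyd) (dirWalk_column (Nat.zero_le x) hxd hy0 hyd) ?_
    simp only [manhattan, Nat.dist]
    omega

theorem strong : gridBox (d + 2) (d + 2) ⊆ strongComponent 𝓐 (0, 0) :=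
  gridBox_subset (walkConvex_strongComponent _ _) (mem_strongComponent_self _ _)
    ⟨⟨_, (dirWalk_first_column (Nat.zero_le _) le_rfl).trans
      (dirWalk_last_row (Nat.zero_le _) le_rfl)⟩,
    ⟨_, (dirWalk_last_column (Nat.zero_le _) le_rfl).trans
      (dirWalk_first_row (Nat.zero_le _) le_rfl)⟩⟩

theorem zero_mem_of_lt (hd : 2 ≤ d) (hfree : SourceSinkFree 𝓐 S) (hxy : (x, y) ∈ S) (hx : x < d)
    (hy : 1 ≤ y) : (0, 0) ∈ S := by
  refine mem_of_descent (A := 𝓐) (T := {u | u.1 < d ∧ 1 ≤ u.2})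
    (fun u => if u.1 = 0 then u.2 else d + 2 + u.1 + if u.2 = d + 1 then 3 else d + 2 - u.2)
    (fun u hu => (hfree u hu).1) ?_ hxy ⟨hx, hy⟩
  rintro ⟨a, b⟩ ⟨ha, hb⟩ ⟨a', b'⟩ harc
  simp only [Prod.mk.injEq, Set.mem_ofPred_eq] at ha hb ⊢
  obtain ⟨⟨⟨_, _⟩, _⟩, ⟨rfl, rfl, hdir⟩ | ⟨rfl, rfl, hdir⟩ | ⟨rfl, rfl, hdir⟩ | ⟨rfl, rfl, hdir⟩⟩ :=
    arc_mk_iff.1 harc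
  all_goals
    dsimp only [squareOrientation] at hdir
    split_ifs <;> first | contradiction | omega

theorem zero_mem_of_boundary (hd : 1 ≤ d) (hfree : SourceSinkFree 𝓐 S) (hxy : (x, y) ∈ S)
    (hy : y = 0 ∨ d ≤ x ∧ y < d) : (0, 0) ∈ S := by
  obtain rfl | hx := Nat.eq_zero_or_pos x
  · obtain rfl : y = 0 := by omega
    exact hxy
  refine mem_of_descent (A := fun u v => 𝓐 v u)
    (T := {u | 0 < u.1 ∧ (u.2 = 0 ∨ d ≤ u.1 ∧ u.2 < d)}) (fun u => u.1 + u.2)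
    (fun u hu => (hfree u hu).2) ?_ hxy ⟨hx, hy⟩
  rintro ⟨a, b⟩ ⟨ha, hb⟩ ⟨a', b'⟩ harc
  simp only [Prod.mk.injEq, Set.mem_ofPred_eq] at ha hb ⊢
  obtain ⟨⟨_, _, _⟩, ⟨rfl, rfl, hdir⟩ | ⟨rfl, rfl, hdir⟩ | ⟨rfl, rfl, hdir⟩ | ⟨rfl, rfl, hdir⟩⟩ :=
    arc_mk_iff.1 harc
  all_goals dsimp only [squareOrientation] at hdir; omega

theorem sq_mem_strongConvexitySpectrum (hd : 2 ≤ d) :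
    (d + 1) * (d + 1) ∈ strongConvexitySpectrum (gridGraph (d + 2) (d + 2)) := by
  have hcard : (Finset.Icc (0, 0) (d, d)).card = (d + 1) * (d + 1) := by
    rw [← Finset.Icc_product_Icc, Finset.card_product, Nat.card_Icc, Nat.sub_zero]
  rw [← hcard]
  refine (squareOrientation d).card_mem_strongConvexitySpectrum
    ⟨(0, 0), by simp⟩ ?_ ?_ strong ?_ ?_
  · rintro ⟨x, y⟩ hxy
    simp only [Finset.coe_Icc, Set.mem_Icc, Prod.mk_le_mk] at hxy
    exact ⟨by dsimp only; omega, by dsimp only; omega⟩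
  · intro hsub
    have hcorner : (d + 1, d + 1) ∈ gridBox (d + 2) (d + 2) :=
      ⟨by dsimp only; omega, by dsimp only; omega⟩
    have := hsub hcorner
    simp only [Finset.coe_Icc, Set.mem_Icc, Prod.mk_le_mk] at this
    omega
  · rw [Finset.coe_Icc]
    exact walkConvex_square (by omega)
  · intro S hbox hS hfree hSC
    obtain ⟨⟨x, y⟩, hxy, hxyC⟩ := Set.not_subset.1 hSC
    obtain ⟨hx, hy⟩ := hbox hxy
    simp only [Finset.coe_Icc, Set.mem_Icc, Prod.mk_le_mk] at hxyC hx hy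
    have hcorner := isFramed.corner_mem hfree hbox hxy (by dsimp only; omega)
    by_cases hsub : S ⊆ Set.Icc (d, d) (d + 1, d + 1)
    · exact .inr ((ncard_le_four_of_subset_unitSquare hsub).trans (by rw [hcard]; nlinarith))
    obtain ⟨⟨a, b⟩, hab, habI⟩ := Set.not_subset.1 hsub
    obtain ⟨ha, hb⟩ := hbox hab
    simp only [Set.mem_Icc, Prod.mk_le_mk] at habI ha hb
    refine .inl (gridBox_subset hS ?_ hcorner)
    by_cases hb' : b = 0 ∨ d ≤ a ∧ b < d
    · exact zero_mem_of_boundary (by omega) hfree hab hb'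
    · exact zero_mem_of_lt hd hfree hab (by omega) (by omega)

end SquareRegion
end Square

/-! ### Seven vertices in the `4 × 4` grid -/

section FourByFour

open GridOrientation

namespace FourByFour

variable {a b x y : ℕ} {S : Set (ℕ × ℕ)}

/-- The orientation of the `4 × 4` grid in which `sevenSet` is a maximum convex set. Outside the
last row and the last column only the four arcs at the lower left corners of the two unit squares
of `sevenSet` deviate from the leftward and upward directions, which makes these squares cyclic. -/
def fourOrientation : GridOrientation where
  right x y := x = 3 ∨ x = y ∧ x ≤ 1
  up x y := y < 3 ∧ ¬ (x = y ∧ x ≤ 1)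

local notation "𝓐" => Arc fourOrientation 4 4

theorem arc_iff : 𝓐 (a, b) (x, y) ↔ ((a < 4 ∧ b < 4) ∧ x < 4 ∧ y < 4) ∧
    ((x = a ∧ y = b + 1 ∧ (a = 3 ∨ a = b ∧ a ≤ 1)) ∨
      (x = a ∧ b = y + 1 ∧ ¬ (x = 3 ∨ x = y ∧ x ≤ 1)) ∨
      (x = a + 1 ∧ y = b ∧ b < 3 ∧ ¬ (a = b ∧ a ≤ 1)) ∨
      (a = x + 1 ∧ y = b ∧ ¬ (y < 3 ∧ ¬ (x = y ∧ x ≤ 1)))) := by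
  rw [arc_mk_iff]
  dsimp only [fourOrientation, gridBox, Set.mem_ofPred_eq]
  omega

theorem isFramed : fourOrientation.IsFramed 2 := by
  constructor <;> dsimp only [fourOrientation] <;> omega

theorem cyclicSquare_zero : fourOrientation.CyclicSquare 0 0 := by
  refine .inl ⟨?_, ?_, ?_, ?_⟩ <;> dsimp only [fourOrientation] <;> omega

theorem cyclicSquare_one : fourOrientation.CyclicSquare 1 1 := by
  refine .inl ⟨?_, ?_, ?_, ?_⟩ <;> dsimp only [fourOrientation] <;> omega

/-- The distance to `sevenSet` at the vertices outside it, corrected by constants at the endpoints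
of the arcs that enter it. -/
def exitPotential (p : ℕ × ℕ) : ℕ :=
  if p.1 = 3 then 7 - p.2 else if p.2 = 0 then 8 else if p.2 = 3 then p.1 + 1 else p.1

theorem eq_of_arc_exit (harc : 𝓐 (a, b) (x, y)) (hab : (a, b) ∈ (sevenSet : Set (ℕ × ℕ)))
    (hxy : (x, y) ∉ (sevenSet : Set (ℕ × ℕ))) :
    (a = 2 ∧ b = 2) ∧ x = 3 ∧ y = 2 ∨ (a = 2 ∧ b = 1) ∧ (x = 2 ∧ y = 0 ∨ x = 3 ∧ y = 1) ∨
      (a = 1 ∧ b = 0) ∧ x = 2 ∧ y = 0 := by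
  rw [mem_sevenSet] at hab hxy
  obtain ⟨-, ⟨rfl, rfl, hdir⟩ | ⟨rfl, rfl, hdir⟩ | ⟨rfl, rfl, hdir⟩ | ⟨rfl, rfl, hdir⟩⟩ :=
    arc_iff.1 harc
  all_goals obtain hab | hab | hab := hab
  all_goals omega

theorem eq_of_arc_entry (harc : 𝓐 (a, b) (x, y)) (hab : (a, b) ∉ (sevenSet : Set (ℕ × ℕ)))
    (hxy : (x, y) ∈ (sevenSet : Set (ℕ × ℕ))) :
    x = 0 ∧ y = 1 ∨ x = 1 ∧ y = 2 ∨ x = 2 ∧ y = 2 := by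
  rw [mem_sevenSet] at hab hxy
  obtain ⟨-, ⟨rfl, rfl, hdir⟩ | ⟨rfl, rfl, -⟩ | ⟨rfl, rfl, hdir⟩ | ⟨rfl, rfl, hdir⟩⟩ :=
    arc_iff.1 harc
  all_goals obtain hxy | hxy | hxy := hxy
  all_goals omega

theorem exitPotential_le_of_arc (hab : (a, b) ∉ (sevenSet : Set (ℕ × ℕ)))
    (harc : 𝓐 (a, b) (x, y)) : exitPotential (a, b) ≤ exitPotential (x, y) + 1 := by
  rw [mem_sevenSet] at hab
  dsimp only [exitPotential]
  obtain ⟨⟨⟨_, _⟩, _, _⟩, ⟨rfl, rfl, hdir⟩ | ⟨rfl, rfl, -⟩ | ⟨rfl, rfl, hdir⟩ |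
    ⟨rfl, rfl, hdir⟩⟩ := arc_iff.1 harc
  all_goals split_ifs <;> first | contradiction | omega

/- Apart from the trivial detour from `(2, 2)` to itself, every detour passes through `(1, 1)`. -/
theorem walkConvex_sevenSet : WalkConvex 𝓐 sevenSet := by
  refine walkConvex_of_detours (fun _ => exitPotential)
    (fun _ _ _ _ hx harc => exitPotential_le_of_arc hx harc) ?_
  have arc {a b x y : ℕ} := (arc_iff (a := a) (b := b) (x := x) (y := y)).2
  have from₁₀ : DirWalk 𝓐 3 (1, 0) (1, 1) := .cons (w := (0, 0)) (arc (by omega))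
    (.cons (w := (0, 1)) (arc (by omega)) (.single (arc (by omega))))
  have from₂₁ : DirWalk 𝓐 1 (2, 1) (1, 1) := .single (arc (by omega))
  have from₂₂ : DirWalk 𝓐 2 (2, 2) (1, 1) := .cons (arc (by omega)) from₂₁
  have to₀₁ : DirWalk 𝓐 3 (1, 1) (0, 1) := .cons (w := (1, 0)) (arc (by omega))
    (.cons (w := (0, 0)) (arc (by omega)) (.single (arc (by omega))))
  have to₁₂ : DirWalk 𝓐 1 (1, 1) (1, 2) := .single (arc (by omega))
  have to₂₂ : DirWalk 𝓐 2 (1, 1) (2, 2) := to₁₂.snoc (arc (by omega))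
  rintro ⟨a, b⟩ hp ⟨x, y⟩ hx hexit ⟨x', y'⟩ hz ⟨a', b'⟩ hq hentry
  obtain ⟨⟨rfl, rfl⟩, rfl, rfl⟩ | ⟨⟨rfl, rfl⟩, ⟨rfl, rfl⟩ | ⟨rfl, rfl⟩⟩ |
      ⟨⟨rfl, rfl⟩, rfl, rfl⟩ := eq_of_arc_exit hexit hp hx <;>
    obtain ⟨rfl, rfl⟩ | ⟨rfl, rfl⟩ | ⟨rfl, rfl⟩ := eq_of_arc_entry hentry hz hq
  case inl.inr.inr => exact ⟨0, .nil _, by decide⟩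
  all_goals first
    | exact ⟨_, from₁₀.trans ‹_›, by decide⟩
    | exact ⟨_, from₂₁.trans ‹_›, by decide⟩
    | exact ⟨_, from₂₂.trans ‹_›, by decide⟩

theorem four_le_of_dirWalk {k : ℕ} (hk : DirWalk 𝓐 k (1, 3) (1, 1)) : 4 ≤ k := by
  have hle := hk.manhattan_le
  have hpar := hk.parity
  dsimp only [manhattan, Nat.dist] at hle hpar
  by_contra! hlt
  obtain rfl : k = 2 := by omega
  obtain ⟨⟨a, b⟩, h₁, hk'⟩ := hk.exists_cons
  obtain ⟨_, h₂, hnil⟩ := hk'.exists_cons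
  obtain rfl := hnil.eq_of_zero
  rw [arc_iff] at h₁ h₂
  omega

theorem first_row_mem (hS : WalkConvex 𝓐 S) (h₁₃ : (1, 3) ∈ S) (h₁₁ : (1, 1) ∈ S) :
    (0, 3) ∈ S ∧ (0, 2) ∈ S ∧ (0, 1) ∈ S := by
  have a₁ : 𝓐 (1, 3) (0, 3) := arc_iff.2 (by omega)
  have a₂ : 𝓐 (0, 3) (0, 2) := arc_iff.2 (by omega)
  have a₃ : 𝓐 (0, 2) (0, 1) := arc_iff.2 (by omega)
  have a₄ : 𝓐 (0, 1) (1, 1) := arc_iff.2 (by omega)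
  have hmin : ∀ k, DirWalk 𝓐 k (1, 3) (1, 1) → 4 ≤ k := fun k => four_le_of_dirWalk
  exact ⟨hS h₁₃ h₁₁ (.single a₁) (.cons a₂ (.cons a₃ (.single a₄))) hmin,
    hS h₁₃ h₁₁ (.cons a₁ (.single a₂)) (.cons a₃ (.single a₄)) hmin,
    hS h₁₃ h₁₁ (.cons a₁ (.cons a₂ (.single a₃))) (.single a₄) hmin⟩

theorem first_column_mem (hS : WalkConvex 𝓐 S) (h₁₀ : (1, 0) ∈ S) (h₃₁ : (3, 1) ∈ S) :
    (2, 0) ∈ S ∧ (3, 0) ∈ S := by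
  have a₁ : 𝓐 (1, 0) (2, 0) := arc_iff.2 (by omega)
  have a₂ : 𝓐 (2, 0) (3, 0) := arc_iff.2 (by omega)
  have a₃ : 𝓐 (3, 0) (3, 1) := arc_iff.2 (by omega)
  exact ⟨hS.mem_of_add_le_manhattan h₁₀ h₃₁ (.single a₁) (.cons a₂ (.single a₃)) (by decide),
    hS.mem_of_add_le_manhattan h₁₀ h₃₁ (.cons a₁ (.single a₂)) (.single a₃) (by decide)⟩

theorem gridBox_subset (hS : WalkConvex 𝓐 S) (hcorner : Set.Icc (2, 2) (3, 3) ⊆ S)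
    (h₁₂ : (1, 2) ∈ S) : gridBox 4 4 ⊆ S := by
  have h₂₂ : (2, 2) ∈ S := hcorner (by decide)
  have h₂₃ : (2, 3) ∈ S := hcorner (by decide)
  have h₃₂ : (3, 2) ∈ S := hcorner (by decide)
  have h₃₃ : (3, 3) ∈ S := hcorner (by decide)
  have hone := hS.square_subset cyclicSquare_one (by omega) (by omega) (arc_iff.2 (by omega)) h₁₂
    h₂₂ (by decide) (by decide)
  have h₁₁ : (1, 1) ∈ S := hone (by decide)
  have h₂₁ : (2, 1) ∈ S := hone (by decide)
  have h₃₁ : (3, 1) ∈ S := hS.mem_of_add_le_manhattan h₂₁ h₃₂ (.single (arc_iff.2 (by omega)))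
    (.single (arc_iff.2 (by omega))) (by decide)
  have h₁₃ : (1, 3) ∈ S := hS.mem_of_add_le_manhattan h₂₃ h₁₂ (.single (arc_iff.2 (by omega)))
    (.single (arc_iff.2 (by omega))) (by decide)
  obtain ⟨h₀₃, h₀₂, h₀₁⟩ := first_row_mem hS h₁₃ h₁₁
  have hzero := hS.square_subset cyclicSquare_zero (by omega) (by omega) (arc_iff.2 (by omega))
    h₀₁ h₁₁ (by decide) (by decide)
  have h₀₀ : (0, 0) ∈ S := hzero (by decide)
  have h₁₀ : (1, 0) ∈ S := hzero (by decide)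
  obtain ⟨h₂₀, h₃₀⟩ := first_column_mem hS h₁₀ h₃₁
  rintro ⟨x, y⟩ ⟨hx, hy⟩
  dsimp only at hx hy
  interval_cases x <;> interval_cases y <;> assumption

theorem strong : gridBox 4 4 ⊆ strongComponent 𝓐 (2, 2) := by
  have arc {a b x y : ℕ} := (arc_iff (a := a) (b := b) (x := x) (y := y)).2
  have a₁ : 𝓐 (2, 2) (3, 2) := arc (by omega)
  have a₂ : 𝓐 (3, 2) (3, 3) := arc (by omega)
  have a₃ : 𝓐 (3, 3) (2, 3) := arc (by omega)
  have a₄ : 𝓐 (2, 3) (2, 2) := arc (by omega)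
  have b₁ : 𝓐 (2, 2) (2, 1) := arc (by omega)
  have b₂ : 𝓐 (2, 1) (1, 1) := arc (by omega)
  have b₃ : 𝓐 (1, 1) (1, 2) := arc (by omega)
  have b₄ : 𝓐 (1, 2) (2, 2) := arc (by omega)
  have hS := walkConvex_strongComponent 𝓐 (2, 2)
  refine gridBox_subset hS (hS.square_subset isFramed.cyclicSquare (by omega) (by omega) a₁
    (mem_strongComponent_self _ _) ⟨⟨_, .single a₁⟩, ⟨_, .cons a₂ (.cons a₃ (.single a₄))⟩⟩
    (by decide) (by decide)) ?_
  exact ⟨⟨_, .cons b₁ (.cons b₂ (.single b₃))⟩, ⟨_, .single b₄⟩⟩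

theorem exists_mem_of_first_column (hfree : SourceSinkFree 𝓐 S) (hxy : (x, y) ∈ S)
    (h : y = 0 ∨ x = 0 ∧ y = 1) : ∃ w ∈ S, w = (1, 1) ∨ w = (3, 1) := by
  refine exists_mem_of_descent (A := 𝓐) (T := {u | u.2 = 0 ∨ u.1 = 0 ∧ u.2 = 1})
    (G := {w | w = (1, 1) ∨ w = (3, 1)})
    (fun u => if u.2 = 1 then 0 else if u.1 = 0 then 1 else 4 - u.1)
    (fun u hu => (hfree u hu).1) ?_ hxy h
  rintro ⟨a, b⟩ hb ⟨a', b'⟩ harc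
  simp only [Prod.mk.injEq, Set.mem_ofPred_eq] at hb ⊢
  obtain ⟨⟨_, _, _⟩, ⟨rfl, rfl, hdir⟩ | ⟨rfl, rfl, hdir⟩ | ⟨rfl, rfl, hdir⟩ | ⟨rfl, rfl, hdir⟩⟩ :=
    arc_iff.1 harc
  all_goals split_ifs <;> first | contradiction | omega

theorem one_three_mem_of_first_row (hfree : SourceSinkFree 𝓐 S) (hxy : (0, y) ∈ S)
    (hy : 2 ≤ y) : (1, 3) ∈ S := by
  refine mem_of_descent (A := fun u v => 𝓐 v u) (T := {u | u.1 = 0 ∧ 2 ≤ u.2})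
    (fun u => 3 - u.2) (fun u hu => (hfree u hu).2) ?_ hxy ⟨rfl, hy⟩
  rintro ⟨a, b⟩ ⟨ha, hb⟩ ⟨a', b'⟩ harc
  simp only [Prod.mk.injEq, Set.mem_ofPred_eq] at ha hb ⊢
  obtain ⟨⟨_, _, _⟩, ⟨rfl, rfl, hdir⟩ | ⟨rfl, rfl, -⟩ | ⟨rfl, rfl, -⟩ | ⟨rfl, rfl, hdir⟩⟩ :=
    arc_iff.1 harc
  all_goals omega

theorem one_two_mem (hS : WalkConvex 𝓐 S) (hfree : SourceSinkFree 𝓐 S)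
    (hcorner : Set.Icc (2, 2) (3, 3) ⊆ S) (hbox : S ⊆ gridBox 4 4) (hxy : (x, y) ∈ S)
    (hout : (x, y) ∉ Set.Icc (2, 2) (3, 3)) : (1, 2) ∈ S := by
  have h₂₂ : (2, 2) ∈ S := hcorner (by decide)
  have of₂₁ (h : (2, 1) ∈ S) : (1, 2) ∈ S :=
    hS.square_subset cyclicSquare_one (by omega) (by omega) (arc_iff.2 (by omega)) h₂₂ h
      (by decide) (by decide) (by decide)
  have of₃₁ (h : (3, 1) ∈ S) : (1, 2) ∈ S :=
    of₂₁ (hS.mem_of_add_le_manhattan h₂₂ h (.single (arc_iff.2 (by omega)))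
      (.single (arc_iff.2 (by omega))) (by decide))
  have of₁₁ (h : (1, 1) ∈ S) : (1, 2) ∈ S :=
    hS.mem_of_add_le_manhattan h h₂₂ (.single (arc_iff.2 (by omega)))
      (.single (arc_iff.2 (by omega))) (by decide)
  have of₁₃ (h : (1, 3) ∈ S) : (1, 2) ∈ S :=
    hS.mem_of_add_le_manhattan h h₂₂ (.single (arc_iff.2 (by omega)))
      (.single (arc_iff.2 (by omega))) (by decide)
  by_cases hcolumn : y = 0 ∨ x = 0 ∧ y = 1
  · obtain ⟨_, h, rfl | rfl⟩ := exists_mem_of_first_column hfree hxy hcolumn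
    exacts [of₁₁ h, of₃₁ h]
  by_cases hrow : x = 0 ∧ 2 ≤ y
  · obtain ⟨rfl, hy⟩ := hrow
    exact of₁₃ (one_three_mem_of_first_row hfree hxy hy)
  obtain ⟨hx, hy⟩ := hbox hxy
  simp only [Set.mem_Icc, Prod.mk_le_mk] at hx hy hout
  obtain ⟨rfl, rfl⟩ | ⟨rfl, rfl⟩ | ⟨rfl, rfl⟩ | ⟨rfl, rfl⟩ | ⟨rfl, rfl⟩ : x = 2 ∧ y = 1 ∨
      x = 3 ∧ y = 1 ∨ x = 1 ∧ y = 1 ∨ x = 1 ∧ y = 3 ∨ x = 1 ∧ y = 2 := by omega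
  exacts [of₂₁ hxy, of₃₁ hxy, of₁₁ hxy, of₁₃ hxy, hxy]

theorem exists_mem_frame (hfree : SourceSinkFree 𝓐 S) (hbox : S ⊆ gridBox 4 4)
    (hxy : (x, y) ∈ S) (hC : (x, y) ∉ (sevenSet : Set (ℕ × ℕ))) :
    ∃ p ∈ S, p.1 = 3 ∨ p.2 = 3 := by
  rw [mem_sevenSet] at hC
  obtain ⟨hx, hy⟩ := hbox hxy
  dsimp only at hx hy
  obtain hlast | ⟨rfl, rfl⟩ | ⟨rfl, rfl⟩ : (x = 3 ∨ y = 3) ∨ x = 0 ∧ y = 2 ∨ x = 2 ∧ y = 0 := by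
    omega
  · exact ⟨_, hxy, hlast⟩
  · exact ⟨_, one_three_mem_of_first_row hfree hxy le_rfl, .inr rfl⟩
  · obtain ⟨⟨⟨a, b⟩, hab, harc⟩, -⟩ := hfree _ hxy
    have := arc_iff.1 harc
    exact ⟨_, hab, by dsimp only; omega⟩

theorem seven_mem_strongConvexitySpectrum :
    7 ∈ strongConvexitySpectrum (gridGraph 4 4) := by
  change sevenSet.card ∈ _
  refine fourOrientation.card_mem_strongConvexitySpectrum ⟨(0, 0), by decide⟩ ?_ ?_
    strong walkConvex_sevenSet ?_
  · rintro ⟨x, y⟩ hxy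
    rw [mem_sevenSet] at hxy
    exact ⟨by dsimp only; omega, by dsimp only; omega⟩
  · intro hsub
    have : (0, 2) ∈ gridBox 4 4 := ⟨by decide, by decide⟩
    exact absurd (hsub this) (by decide)
  · intro S hbox hS hfree hSC
    obtain ⟨⟨x, y⟩, hxy, hxyC⟩ := Set.not_subset.1 hSC
    obtain ⟨p, hp, hlast⟩ := exists_mem_frame hfree hbox hxy hxyC
    have hcorner := isFramed.corner_subset hS hfree hbox hp hlast
    by_cases hsub : S ⊆ Set.Icc (2, 2) (3, 3)
    · exact .inr ((ncard_le_four_of_subset_unitSquare hsub).trans (by decide))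
    · obtain ⟨⟨a, b⟩, hab, hout⟩ := Set.not_subset.1 hsub
      exact .inl (gridBox_subset hS hcorner (one_two_mem hS hfree hcorner hbox hab hout))

end FourByFour
end FourByFour

/-! ### The spectrum -/

section Spectrum

/-- Row lengths of the staircase with `p` rows of length `b`, followed by a row of length `u` and
a row of length `v`. -/
def staircaseLength (p b u v x : ℕ) : ℕ :=
  if x < p then b else if x = p then u else if x = p + 1 then v else 0

theorem sum_staircaseLength (p b u v N : ℕ) :
    ∑ x ∈ Finset.range N, staircaseLength p b u v x =
      if N ≤ p then N * b else if N = p + 1 then p * b + u else p * b + u + v := by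
  induction N with
  | zero => simp
  | succ N ih =>
    rw [Finset.sum_range_succ, ih]
    obtain h | rfl | rfl | h : N + 1 ≤ p ∨ N = p ∨ N = p + 1 ∨ p + 2 ≤ N := by omega
    · rw [if_pos (by omega), if_pos h, staircaseLength, if_pos (by omega), Nat.succ_mul]
    · simp [staircaseLength]
    · simp [staircaseLength]
    · have hlast : staircaseLength p b u v N = 0 := by unfold staircaseLength; split_ifs <;> omega
      split_ifs <;> omega

theorem isStaircase_staircaseLength {p e u v : ℕ} (hp : 3 ≤ p ∨ p = 2 ∧ u = e + 1)
    (hu : u ≤ e + 2) (hvu : v ≤ u) (hu1 : u ≠ 1) (hv1 : v ≠ 1) :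
    IsStaircase e (staircaseLength p (e + 2) u v) := by
  constructor <;> intros <;> unfold staircaseLength <;> split_ifs <;> omega

theorem rows_mem_strongConvexitySpectrum {n m b p u v : ℕ} (hb : 2 ≤ b) (hm : b + 2 ≤ m)
    (hp : 3 ≤ p ∨ p = 2 ∧ u + 1 = b) (hn : 3 ≤ n) (hu : u ≤ b) (hvu : v ≤ u) (hu1 : u ≠ 1)
    (hv1 : v ≠ 1) (hpn : p ≤ n) (hun : u ≠ 0 → p < n) (hvn : v ≠ 0 → p + 1 < n) :
    p * b + u + v ∈ strongConvexitySpectrum (gridGraph n m) := by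
  obtain ⟨e, rfl⟩ := Nat.exists_eq_add_of_le' hb
  have hsum : ∑ x ∈ Finset.range n, staircaseLength p (e + 2) u v x = p * (e + 2) + u + v := by
    rw [sum_staircaseLength]
    split_ifs
    · obtain rfl : n = p := by omega
      omega
    · omega
    · rfl
  rw [← hsum]
  exact (isStaircase_staircaseLength (by omega) hu hvu hu1 hv1).sum_mem_strongConvexitySpectrum
    hn (by omega)

theorem mem_strongConvexitySpectrum_of_three_mul_le {n m b s : ℕ} (hb : 3 ≤ b) (hm : b + 2 ≤ m)
    (h3b : 3 * b ≤ s) (hs : s ≤ n * b) : s ∈ strongConvexitySpectrum (gridGraph n m) := by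
  obtain ⟨q, r, hr, rfl⟩ : ∃ q r, r < b ∧ s = q * b + r :=
    ⟨s / b, s % b, Nat.mod_lt _ (by omega), (Nat.div_add_mod' s b).symm⟩
  have hq : 3 ≤ q := by
    by_contra! h
    have : q * b ≤ 2 * b := Nat.mul_le_mul_right _ (by omega)
    omega
  have hqn : q ≤ n := Nat.le_of_mul_le_mul_right (by omega) (show 0 < b by omega)
  have hqn' : r ≠ 0 → q < n := fun h => hqn.lt_of_ne (by rintro rfl; omega)
  -- A single leftover vertex cannot form a row: `b + 1` is split as `(b - 1) + 2` instead.
  obtain rfl | hr1 := eq_or_ne r 1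
  · obtain ⟨p, rfl⟩ : ∃ p, q = p + 1 := ⟨q - 1, by omega⟩
    have hrows : (p + 1) * b + 1 = p * b + (b - 1) + 2 := by rw [Nat.succ_mul]; omega
    rw [hrows]
    apply rows_mem_strongConvexitySpectrum <;> omega
  · exact rows_mem_strongConvexitySpectrum (v := 0) (by omega) hm (.inl hq) (by omega) hr.le
      (Nat.zero_le r) hr1 (by omega) hqn hqn' (by omega)

theorem mem_strongConvexitySpectrum_of_le_mul {n m s : ℕ} (hn : 4 ≤ n) (hnm : n ≤ m) (h8 : 8 ≤ s)
    (hs : s ≤ n * (m - 2)) : s ∈ strongConvexitySpectrum (gridGraph n m) := by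
  obtain rfl | h9 := h8.eq_or_lt
  · exact rows_mem_strongConvexitySpectrum (b := 2) (p := 4) (u := 0) (v := 0) le_rfl (by omega)
      (by omega) (by omega) (by omega) le_rfl (by omega) (by omega) hn (by omega) (by omega)
  have hm : 5 ≤ m := by
    by_contra! h
    obtain ⟨rfl, rfl⟩ : m = 4 ∧ n = 4 := by omega
    omega
  obtain hwide | hnarrow := le_or_gt (3 * (m - 2)) s
  · exact mem_strongConvexitySpectrum_of_three_mul_le (b := m - 2) (by omega) (by omega) hwide hs
  · have : 4 * (s / 3) ≤ n * (s / 3) := Nat.mul_le_mul_right _ hn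
    exact mem_strongConvexitySpectrum_of_three_mul_le (b := s / 3) (by omega) (by omega) (by omega)
      (by omega)

theorem mem_strongConvexitySpectrum_of_le {n m s : ℕ} (hn : 4 ≤ n) (hnm : n ≤ m) (h7 : 7 ≤ s)
    (hs : s ≤ (n - 1) * (m - 1)) : s ∈ strongConvexitySpectrum (gridGraph n m) := by
  obtain rfl | h8 := h7.eq_or_lt
  · obtain hm | hm := le_or_gt 5 m
    · exact SevenSet.seven_mem_strongConvexitySpectrum hn hm
    · obtain ⟨rfl, rfl⟩ : m = 4 ∧ n = 4 := by omega
      exact FourByFour.seven_mem_strongConvexitySpectrum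
  obtain hstairs | hsquare := le_or_gt s (n * (m - 2))
  · exact mem_strongConvexitySpectrum_of_le_mul hn hnm h8 hstairs
  -- Now `n * (m - 2) < s ≤ (n - 1) * (m - 1)` forces `n = m` and `s = (n - 1) ^ 2`.
  obtain ⟨d, rfl⟩ : ∃ d, n = d + 2 := ⟨n - 2, by omega⟩
  obtain ⟨f, rfl⟩ : ∃ f, m = f + 2 := ⟨m - 2, by omega⟩
  simp only [Nat.add_sub_cancel, Nat.add_succ_sub_one] at hs hsquare
  have hupper : (d + 1) * (f + 1) = d * f + d + f + 1 := by ring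
  have hlower : (d + 2) * f = d * f + 2 * f := by ring
  obtain rfl : f = d := by omega
  obtain rfl : s = (f + 1) * (f + 1) := by omega
  exact SquareRegion.sq_mem_strongConvexitySpectrum (by omega)

theorem ab_sub_kl_mem_strongConvexitySpectrum_grid_general {n m s : ℕ} (hn : 4 ≤ n) (hm : 4 ≤ m)
    (h7 : 7 ≤ s) (hs : s ≤ (n - 1) * (m - 1)) : s ∈ strongConvexitySpectrum (gridGraph n m) := by
  obtain hnm | hmn := le_total n m
  · exact mem_strongConvexitySpectrum_of_le hn hnm h7 hs
  · have hswap : gridGraph n m ≃g gridGraph m n := SimpleGraph.boxProdComm _ _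
    exact strongConvexitySpectrum_subset_of_iso hswap
      (mem_strongConvexitySpectrum_of_le hm hmn h7 (hs.trans_eq (Nat.mul_comm _ _)))

theorem seven_le_mul_sub_add {a b k l : ℕ} (ha : 3 ≤ a) (hb : 3 ≤ b) (hk : k ≤ a - 2)
    (hl : l ≤ b - 2) : 7 ≤ a * b - (k + l) := by
  obtain ⟨i, rfl⟩ := Nat.exists_eq_add_of_le' ha
  obtain ⟨j, rfl⟩ := Nat.exists_eq_add_of_le' hb
  have hexpand : (i + 3) * (j + 3) = i * j + 3 * i + 3 * j + 9 := by ring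
  omega

end Spectrum

/-- Realizable values `ab - (k + l)` in the strong convexity spectrum of `P_n □ P_m`. -/
theorem ab_sub_kl_mem_strongConvexitySpectrum_grid (n m : ℕ) (hn : 4 ≤ n) (hm : 4 ≤ m)
    (a b k l : ℕ) (ha3 : 3 ≤ a) (hb3 : 3 ≤ b)
    (hk : k ≤ a - 2) (ha : a - 2 ≤ n - 3) (hl : l ≤ b - 2) (hb : b - 2 ≤ m - 3) :
    a * b - (k + l) ∈ strongConvexitySpectrum (gridGraph n m) := by
  have hab : a * b ≤ (n - 1) * (m - 1) := Nat.mul_le_mul (by omega) (by omega)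
  exact ab_sub_kl_mem_strongConvexitySpectrum_grid_general hn hm
    (seven_le_mul_sub_add ha3 hb3 hk hl) ((Nat.sub_le _ _).trans hab)
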